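/- Let k be a natural number and G a 2-connected graph with distinct vertices a, b such that every vertex v ∉ {a, b} has degree at least d in G. Suppose G has the property (inherited by all its subgraphs) that for any two vertices x, y there is a partition of V(G) into sets X ∋ x and Y ∋ y such that every vertex of X loses at most k neighbours when restricted to G[X], and similarly for Y. Then G contains an a–b path of length at least 2^(d/(k+2)). -/

import Mathlib

def TwoConnected {V : Type*} (H : SimpleGraph V) : Prop :=
  (∃ x y z : V, x ≠ y ∧ x ≠ z ∧ y ≠ z) ∧
  ∀ v : V, ((⊤ : H.Subgraph).deleteVerts {v}).coe.Connected

/-!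
Call `G[W]` anchored at `a, b` if no vertex of `W` separates another one from both `a` and `b`,
that is, if `G[W] + ab` is 2-connected. For finite `W` we argue by induction on the degree bound
`d` and, for fixed `d`, on `|W|`.

Take neighbours `x ≠ b` of `a` and `y ≠ a` of `b` and split `W` into `X ∋ x` and `Y ∋ y`. In a leaf
block `B` of the component of `x` in `G[X \ {b}]`, all degrees except the one at `a` or at the cut
vertex have dropped by at most `k + 1`. After deleting this exceptional vertex too, induction shows
that any two vertices of `B` are joined inside `B` by a path of length at least
`2 ^ ((d - k - 2) / (k + 2))`, half of what is wanted. The same holds for a leaf block `B'` obtained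
from `y` in `G[Y \ {a}]`. If `G[W] + ab` contains three disjoint `B`-`B'` paths, then two disjoint
paths from `{a, b}` to the union of these with `B` and `B'` use up at most two of the three, and can
be continued to an `a`-`b` path that crosses `B`, the third path and `B'`. Otherwise, by Menger's
theorem, two vertices `s, t` cut off a part `K` of `W \ {a, b}`; then `G[K ∪ {s, t}]` is a smaller
graph anchored at `s, t`, and its long `s`-`t` path extends to `a` and `b`.

If `W` is infinite and no `a`-`b` path is long, then every component of `G[W \ {a, b}]` has bounded
diameter, hence is finite because degrees are, and one component together with `a` and `b` suffices.
-/

namespace SplittingPath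

open SimpleGraph

variable {V : Type*} {G : SimpleGraph V} {A B B' C D K L M P Q R S T U W Z : Set V}
  {a b c l p q r s t u v w x y z : V} {d k m n : ℕ} {F : V → Set V} {f g : V → V}

/-! ### Walks inside a vertex set -/

/-- `u` and `v` are joined by a walk of `G` all of whose vertices lie in `A`. -/
def Linked (G : SimpleGraph V) (A : Set V) (u v : V) : Prop :=
  ∃ p : G.Walk u v, ∀ x ∈ p.support, x ∈ A

/-- `A` is the vertex set of a path of `G` from `u` to `v`. -/
def IsPathSet (G : SimpleGraph V) (A : Set V) (u v : V) : Prop :=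
  ∃ p : G.Walk u v, p.IsPath ∧ ∀ x, x ∈ p.support ↔ x ∈ A

/-- Some path of `G[A]` from `u` to `v` has at least `n` edges. -/
def LongPath (G : SimpleGraph V) (A : Set V) (n : ℕ) (u v : V) : Prop :=
  ∃ p : G.Walk u v, p.IsPath ∧ (∀ x ∈ p.support, x ∈ A) ∧ n ≤ p.length

theorem Linked.refl (hu : u ∈ A) : Linked G A u u :=
  ⟨.nil, by simpa using hu⟩

theorem Linked.symm (h : Linked G A u v) : Linked G A v u := by
  obtain ⟨p, hp⟩ := h
  exact ⟨p.reverse, by simpa using hp⟩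

theorem Linked.trans (huv : Linked G A u v) (hvw : Linked G A v w) : Linked G A u w := by
  obtain ⟨p, hp⟩ := huv
  obtain ⟨q, hq⟩ := hvw
  refine ⟨p.append q, fun x hx => ?_⟩
  rcases Walk.mem_support_append_iff p q |>.1 hx with hx | hx
  exacts [hp x hx, hq x hx]

theorem Linked.mono (h : Linked G A u v) (hAB : A ⊆ B) : Linked G B u v := by
  obtain ⟨p, hp⟩ := h
  exact ⟨p, fun x hx => hAB (hp x hx)⟩

theorem Linked.left_mem (h : Linked G A u v) : u ∈ A := by
  obtain ⟨p, hp⟩ := h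
  exact hp u p.start_mem_support

theorem Linked.right_mem (h : Linked G A u v) : v ∈ A :=
  h.symm.left_mem

theorem linked_of_adj (h : G.Adj u v) (hu : u ∈ A) (hv : v ∈ A) : Linked G A u v :=
  ⟨h.toWalk, by simp [hu, hv]⟩

theorem Linked.trans_adj (h : Linked G A u v) (hvw : G.Adj v w) (hw : w ∈ A) : Linked G A u w :=
  h.trans (linked_of_adj hvw h.right_mem hw)

theorem Linked.exists_adj_of_mem_of_notMem (h : Linked G A u v) (hu : u ∈ S) (hv : v ∉ S) :
    ∃ x ∈ A ∩ S, ∃ y ∈ A \ S, G.Adj x y := by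
  obtain ⟨p, hp⟩ := h
  obtain ⟨e, he, hfst, hsnd⟩ := p.exists_boundary_dart S hu hv
  exact ⟨e.fst, ⟨hp _ (p.dart_fst_mem_support_of_mem_darts he), hfst⟩,
    e.snd, ⟨hp _ (p.dart_snd_mem_support_of_mem_darts he), hsnd⟩, e.adj⟩

theorem IsPathSet.symm (h : IsPathSet G A u v) : IsPathSet G A v u := by
  obtain ⟨p, hp, hA⟩ := h
  exact ⟨p.reverse, hp.reverse, by simpa using hA⟩

theorem isPathSet_of_adj (h : G.Adj u v) : IsPathSet G {u, v} u v :=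
  ⟨h.toWalk, by simp [h.ne], by simp⟩

theorem IsPathSet.linked (h : IsPathSet G A u v) : Linked G A u v := by
  obtain ⟨p, -, hA⟩ := h
  exact ⟨p, fun x => (hA x).1⟩

theorem LongPath.mono (h : LongPath G A n u v) (hAB : A ⊆ B) (hmn : m ≤ n) :
    LongPath G B m u v := by
  obtain ⟨p, hp, hA, hn⟩ := h
  exact ⟨p, hp, fun x hx => hAB (hA x hx), hmn.trans hn⟩

theorem LongPath.symm (h : LongPath G A n u v) : LongPath G A n v u := by
  obtain ⟨p, hp, hA, hn⟩ := h
  exact ⟨p.reverse, hp.reverse, by simpa using hA, by simpa using hn⟩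

theorem Linked.longPath (h : Linked G A u v) : LongPath G A 0 u v := by
  classical
  obtain ⟨p, hp⟩ := h
  exact ⟨p.bypass, p.bypass_isPath, fun x hx => hp x (p.support_bypass_subset_support hx),
    Nat.zero_le _⟩

theorem isPath_append {p : G.Walk u v} {q : G.Walk v w} (hp : p.IsPath) (hq : q.IsPath)
    (hpq : ∀ x ∈ p.support, x ∈ q.support → x = v) : (p.append q).IsPath := by
  induction p with
  | nil => simpa using hq
  | cons huw p ih =>
    rw [Walk.cons_isPath_iff] at hp
    rw [Walk.cons_append, Walk.cons_isPath_iff, Walk.mem_support_append_iff]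
    refine ⟨ih hp.1 hq fun x hx => hpq x (by simp [hx]), ?_⟩
    rintro (hu | hu)
    · exact hp.2 hu
    · exact hp.2 (hpq _ (by simp) hu ▸ p.end_mem_support)

theorem IsPathSet.append (huv : IsPathSet G A u v) (hvw : IsPathSet G B v w)
    (hAB : A ∩ B ⊆ {v}) : IsPathSet G (A ∪ B) u w := by
  obtain ⟨p, hp, hpA⟩ := huv
  obtain ⟨q, hq, hqB⟩ := hvw
  refine ⟨p.append q, isPath_append hp hq fun x hx hx' => hAB ⟨(hpA x).1 hx, (hqB x).1 hx'⟩,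
    fun x => ?_⟩
  rw [Walk.mem_support_append_iff, hpA, hqB]
  rfl

theorem IsPathSet.longPath_one (h : IsPathSet G A u v) (huv : u ≠ v) : LongPath G A 1 u v := by
  obtain ⟨p, hp, hA⟩ := h
  exact ⟨p, hp, fun x => (hA x).1, Nat.one_le_iff_ne_zero.2 (mt Walk.eq_of_length_eq_zero huv)⟩

theorem LongPath.append (huv : LongPath G A m u v) (hvw : LongPath G B n v w)
    (hAB : A ∩ B ⊆ {v}) : LongPath G (A ∪ B) (m + n) u w := by
  obtain ⟨p, hp, hpA, hm⟩ := huv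
  obtain ⟨q, hq, hqB, hn⟩ := hvw
  refine ⟨p.append q, isPath_append hp hq fun x hx hx' => hAB ⟨hpA x hx, hqB x hx'⟩,
    fun x hx => ?_, by rw [Walk.length_append]; omega⟩
  exact (Walk.mem_support_append_iff p q |>.1 hx).imp (hpA x) (hqB x)

theorem IsPathSet.split (h : IsPathSet G A u v) (hw : w ∈ A) :
    ∃ S T, IsPathSet G S u w ∧ IsPathSet G T w v ∧ S ∪ T = A ∧ S ∩ T = {w} := by
  obtain ⟨p, hp, hA⟩ := h
  obtain ⟨q, r, rfl⟩ := Walk.mem_support_iff_exists_append.1 ((hA w).2 hw)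
  refine ⟨{x | x ∈ q.support}, {x | x ∈ r.support}, ⟨q, hp.of_append_left, by simp⟩,
    ⟨r, hp.of_append_right, by simp⟩, ?_, ?_⟩
  · ext x
    rw [← hA, Walk.mem_support_append_iff]
    rfl
  · ext x
    refine ⟨fun hx => ?_, ?_⟩
    · by_contra hxw
      exact hp.ne_of_mem_support_of_append hxw hx.1 hx.2 rfl
    · rintro rfl
      exact ⟨q.end_mem_support, r.start_mem_support⟩

theorem exists_walk_first_mem (p : G.Walk u v) (hv : v ∈ S) :
    ∃ s ∈ S, ∃ q : G.Walk u s, q.support ⊆ p.support ∧ ∀ x ∈ q.support, x ∈ S → x = s := by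
  induction p with
  | nil => exact ⟨_, hv, .nil, by simp, by simp⟩
  | @cons u w v huw p ih =>
    by_cases hu : u ∈ S
    · exact ⟨u, hu, .nil, by simp, by simp⟩
    · obtain ⟨s, hs, q, hqp, hqs⟩ := ih hv
      refine ⟨s, hs, .cons huw q, ?_, ?_⟩
      · exact List.cons_subset_cons _ hqp
      · simpa [hu] using hqs

theorem Linked.exists_isPathSet (h : Linked G A u v) (hu : u ∈ X) (hv : v ∈ Y) :
    ∃ P ⊆ A, ∃ x ∈ X, ∃ y ∈ Y, IsPathSet G P x y ∧ P ∩ X = {x} ∧ P ∩ Y = {y} := by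
  classical
  obtain ⟨p, hp⟩ := h
  obtain ⟨y, hy, q, hqp, hqy⟩ := exists_walk_first_mem p hv
  obtain ⟨x, hx, r, hrq, hrx⟩ := exists_walk_first_mem q.reverse hu
  have hsub : r.bypass.support ⊆ q.support := fun z hz => by
    simpa using hrq (r.support_bypass_subset_support hz)
  refine ⟨{z | z ∈ r.bypass.support}, fun z hz => hp z (hqp (hsub hz)), x, hx, y, hy,
    IsPathSet.symm ⟨r.bypass, r.bypass_isPath, by simp⟩, ?_, ?_⟩
  · ext z
    refine ⟨fun hz => hrx z (r.support_bypass_subset_support hz.1) hz.2, ?_⟩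
    rintro rfl
    exact ⟨r.bypass.end_mem_support, hx⟩
  · ext z
    refine ⟨fun hz => hqy z (hsub hz.1) hz.2, ?_⟩
    rintro rfl
    exact ⟨r.bypass.start_mem_support, hy⟩

theorem Linked.exists_isPathSet_subset (h : Linked G A u v) : ∃ P ⊆ A, IsPathSet G P u v := by
  obtain ⟨P, hPA, x, rfl, y, rfl, hP, -⟩ :=
    h.exists_isPathSet (Set.mem_singleton u) (Set.mem_singleton v)
  exact ⟨P, hPA, hP⟩

/-! ### Menger's theorem -/

/-- Deleting fewer than `k` vertices of `G[W]` never separates `A` from `B`. -/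
def RobustlyLinked (G : SimpleGraph V) (W A B : Set V) (k : ℕ) : Prop :=
  ∀ S ⊆ W, S.ncard < k → ∃ a ∈ A, ∃ b ∈ B, Linked G (W \ S) a b

/-- There are `k` pairwise disjoint subsets of `W`, each linking `A` to `B`. The sets are labelled
by the elements of an arbitrary `k`-set `T` of vertices. -/
def DisjointlyLinked (G : SimpleGraph V) (W A B : Set V) (k : ℕ) : Prop :=
  ∃ (T : Set V) (P : V → Set V), T.ncard = k ∧ T.PairwiseDisjoint P ∧
    ∀ t ∈ T, P t ⊆ W ∧ ∃ a ∈ A, ∃ b ∈ B, Linked G (P t) a b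

/-- `P` is the vertex set of a path in `G[W]` from `x ∈ A` to `y ∈ B` with no other vertices in
`A` or `B`. -/
structure IsStrand (G : SimpleGraph V) (W A B P : Set V) (x y : V) : Prop where
  subset : P ⊆ W
  isPathSet : IsPathSet G P x y
  inter_left : P ∩ A = {x}
  inter_right : P ∩ B = {y}

theorem IsStrand.symm (h : IsStrand G W A B P x y) : IsStrand G W B A P y x :=
  ⟨h.subset, h.isPathSet.symm, h.inter_right, h.inter_left⟩

theorem IsStrand.left_mem (h : IsStrand G W A B P x y) : x ∈ P ∩ A :=
  h.inter_left.ge rfl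

theorem IsStrand.right_mem (h : IsStrand G W A B P x y) : y ∈ P ∩ B :=
  h.inter_right.ge rfl

theorem RobustlyLinked.symm (h : RobustlyLinked G W A B k) : RobustlyLinked G W B A k := by
  intro S hSW hSk
  obtain ⟨a, ha, b, hb, hab⟩ := h S hSW hSk
  exact ⟨b, hb, a, ha, hab.symm⟩

theorem Linked.hits_or_avoids (h : Linked G A u v) (S : Set V) :
    (∃ s ∈ S, Linked G A u s) ∨ Linked G (A \ S) u v := by
  classical
  obtain ⟨p, hp⟩ := h
  by_cases hS : ∃ s ∈ p.support, s ∈ S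
  · obtain ⟨s, hsp, hs⟩ := hS
    exact .inl ⟨s, hs, p.takeUntil s hsp, fun z hz =>
      hp z (p.support_takeUntil_subset_support hsp hz)⟩
  · push Not at hS
    exact .inr ⟨p, fun z hz => ⟨hp z hz, hS z hz⟩⟩

theorem Linked.deleteEdges_singleton (h : Linked G A u v) (x y : V) :
    Linked (G.deleteEdges {s(x, y)}) A u v ∨
      (Linked (G.deleteEdges {s(x, y)}) A u x ∧ Linked (G.deleteEdges {s(x, y)}) A y v) ∨
      (Linked (G.deleteEdges {s(x, y)}) A u y ∧ Linked (G.deleteEdges {s(x, y)}) A x v) := by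
  obtain ⟨p, hp⟩ := h
  induction p with
  | nil => exact .inl (.refl (hp _ (by simp)))
  | @cons u w v huw p ih =>
    have hu : u ∈ A := hp u (by simp)
    have hw : w ∈ A := hp w (by simp)
    have ih := ih fun z hz => hp z (by simp [hz])
    by_cases he : s(u, w) = s(x, y)
    · rcases Sym2.eq_iff.1 he with ⟨rfl, rfl⟩ | ⟨rfl, rfl⟩
      · rcases ih with h | ⟨-, h⟩ | ⟨-, h⟩
        exacts [.inr (.inl ⟨.refl hu, h⟩), .inr (.inl ⟨.refl hu, h⟩), .inl h]
      · rcases ih with h | ⟨-, h⟩ | ⟨-, h⟩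
        exacts [.inr (.inr ⟨.refl hu, h⟩), .inl h, .inr (.inr ⟨.refl hu, h⟩)]
    · have huw' : Linked (G.deleteEdges {s(x, y)}) A u w :=
        linked_of_adj (by simpa [huw] using he) hu hw
      exact ih.imp huw'.trans (.imp (.imp_left huw'.trans) (.imp_left huw'.trans))

theorem Linked.of_le {G' : SimpleGraph V} (h : Linked G' A u v) (hG : G' ≤ G) :
    Linked G A u v := by
  obtain ⟨p, hp⟩ := h
  exact ⟨p.mapLe hG, by simpa using hp⟩

theorem RobustlyLinked.deleteEdges_insert (h : RobustlyLinked G W A B k)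
    (hAB : ∀ a ∈ A, ∀ b ∈ B, ¬ Linked (G.deleteEdges {s(x, y)}) (W \ S) a b)
    (hAy : ∀ a ∈ A, ¬ Linked (G.deleteEdges {s(x, y)}) (W \ S) a y) :
    RobustlyLinked (G.deleteEdges {s(x, y)}) W A (insert x S) k := by
  intro R hRW hRk
  obtain ⟨a, ha, b, hb, hab⟩ := h R hRW hRk
  have of_not_linked : ∀ z, ¬ Linked (G.deleteEdges {s(x, y)}) (W \ S) a z →
      Linked (G.deleteEdges {s(x, y)}) (W \ R) a z →
      ∃ s ∈ S, Linked (G.deleteEdges {s(x, y)}) (W \ R) a s := fun z hz hRz =>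
    (hRz.hits_or_avoids S).resolve_right fun hSz =>
      hz (hSz.mono (Set.sdiff_subset_sdiff_left Set.sdiff_subset))
  suffices ∃ s ∈ insert x S, Linked (G.deleteEdges {s(x, y)}) (W \ R) a s from ⟨a, ha, this⟩
  rcases hab.deleteEdges_singleton x y with hab | ⟨hax, -⟩ | ⟨hay, -⟩
  · obtain ⟨s, hs, has⟩ := of_not_linked b (hAB a ha b hb) hab
    exact ⟨s, .inr hs, has⟩
  · exact ⟨x, .inl rfl, hax⟩
  · obtain ⟨s, hs, has⟩ := of_not_linked y (hAy a ha) hay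
    exact ⟨s, .inr hs, has⟩

theorem DisjointlyLinked.exists_isStrand (h : DisjointlyLinked G W A B k) :
    ∃ (T : Set V) (P : V → Set V) (x y : V → V), T.ncard = k ∧ T.PairwiseDisjoint P ∧
      ∀ t ∈ T, IsStrand G W A B (P t) (x t) (y t) := by
  obtain ⟨T, P, hT, hP, hlink⟩ := h
  have trim : ∀ t, ∃ Q x y, t ∈ T → IsStrand G (P t) A B Q x y := by
    intro t
    by_cases ht : t ∈ T
    · obtain ⟨-, a, ha, b, hb, hab⟩ := hlink t ht
      obtain ⟨Q, hQ, x, -, y, -, hxy⟩ := hab.exists_isPathSet ha hb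
      exact ⟨Q, x, y, fun _ => ⟨hQ, hxy.1, hxy.2.1, hxy.2.2⟩⟩
    · exact ⟨∅, t, t, fun h => absurd h ht⟩
  choose Q x y hQ using trim
  refine ⟨T, Q, x, y, hT, fun s hs t ht hst => ?_, fun t ht => ?_⟩
  · exact (hP hs ht hst).mono (hQ s hs).subset (hQ t ht).subset
  · exact ⟨(hQ t ht).subset.trans (hlink t ht).1, (hQ t ht).2, (hQ t ht).3, (hQ t ht).4⟩

theorem DisjointlyLinked.exists_isStrand_to (h : DisjointlyLinked G W A B k) (hB : B.Finite)
    (hBk : B.ncard = k) :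
    ∃ (P : V → Set V) (x : V → V), B.PairwiseDisjoint P ∧
      ∀ b ∈ B, IsStrand G W A B (P b) (x b) b := by
  obtain ⟨T, P, x, y, hTk, hdisj, hP⟩ := h.exists_isStrand
  have hy : ∀ t ∈ T, y t ∈ P t ∩ B := fun t ht => (hP t ht).inter_right.ge rfl
  have hinj : Set.InjOn y T := fun s hs t ht hst => by
    by_contra hne
    exact Set.disjoint_left.1 (hdisj hs ht hne) (hy s hs).1 (hst ▸ (hy t ht).1)
  have himage : y '' T = B := by
    refine Set.eq_of_subset_of_ncard_le (Set.image_subset_iff.2 fun t ht => (hy t ht).2) ?_ hB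
    rw [hinj.ncard_image, hTk, hBk]
  have hsurj : ∀ b ∈ B, ∃ t ∈ T, y t = b := himage.ge
  choose! l hlT hl using hsurj
  refine ⟨P ∘ l, x ∘ l, fun b hb c hc hbc => ?_, fun b hb => ?_⟩
  · refine hdisj (hlT b hb) (hlT c hc) fun hlbc => hbc ?_
    rw [← hl b hb, ← hl c hc, hlbc]
  · simpa only [Function.comp_apply, hl b hb] using hP (l b) (hlT b hb)

theorem disjointlyLinked_of_forall_not_adj (h : RobustlyLinked G W A B k)
    (hG : ∀ u ∈ W, ∀ v ∈ W, ¬ G.Adj u v) : DisjointlyLinked G W A B k := by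
  have hk : k ≤ (A ∩ B ∩ W).ncard := by
    by_contra! hlt
    obtain ⟨a, ha, b, hb, hab⟩ := h _ Set.inter_subset_right hlt
    by_cases hne : b = a
    · subst hne
      exact hab.left_mem.2 ⟨⟨ha, hb⟩, hab.left_mem.1⟩
    · obtain ⟨u, hu, v, hv, huv⟩ := hab.exists_adj_of_mem_of_notMem (Set.mem_singleton a) hne
      exact hG u hu.1.1 v hv.1.1 huv
  obtain ⟨T, hT, hTk⟩ := Set.exists_subset_card_eq hk
  refine ⟨T, fun t => {t}, hTk, fun s _ t _ hst => by simpa using hst, fun t ht => ?_⟩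
  exact ⟨by simpa using (hT ht).2, t, (hT ht).1.1, t, (hT ht).1.2, .refl rfl⟩

theorem IsPathSet.linked_diff (h : IsPathSet G A u v) (hST : S ⊆ T) (hA : A ∩ T = {v})
    (hw : w ∈ A) (hwS : w ∉ S) : Linked G (A \ S) u w := by
  obtain ⟨D, E, hD, hE, rfl, hDE⟩ := h.split hw
  refine hD.linked.mono fun z hz => ⟨.inl hz, fun hzS => hwS ?_⟩
  have hzv : z = v := hA.le ⟨.inl hz, hST hzS⟩
  have hzw : z = w := hDE.le ⟨hz, hzv ▸ hE.linked.right_mem⟩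
  exact hzw ▸ hzS

theorem IsStrand.disjoint_of_separator (hP : IsStrand G W A (insert x S) P u v)
    (hQ : IsStrand G W B (insert y S) Q w z)
    (hAB : ∀ a ∈ A, ∀ b ∈ B, ¬ Linked G (W \ S) a b) (hvz : v = z → v ∉ S) : Disjoint P Q := by
  refine Set.disjoint_left.2 fun t htP htQ => ?_
  have htS : t ∈ S := by
    by_contra htS
    have hut := hP.isPathSet.linked_diff (Set.subset_insert x S) hP.inter_right htP htS
    have hwt := hQ.isPathSet.linked_diff (Set.subset_insert y S) hQ.inter_right htQ htS
    exact hAB u hP.left_mem.2 w hQ.left_mem.2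
      ((hut.mono (Set.sdiff_subset_sdiff_left hP.subset)).trans
        (hwt.mono (Set.sdiff_subset_sdiff_left hQ.subset)).symm)
  have htv : t = v := hP.inter_right.le ⟨htP, .inr htS⟩
  have htz : t = z := hQ.inter_right.le ⟨htQ, .inr htS⟩
  exact hvz (htv.symm.trans htz) (htv ▸ htS)

theorem DisjointlyLinked.of_separator {G' : SimpleGraph V} (hG : G' ≤ G) (hxy : G.Adj x y)
    (hS : S.Finite) (hx : x ∉ S) (hy : y ∉ S)
    (hAB : ∀ a ∈ A, ∀ b ∈ B, ¬ Linked G' (W \ S) a b)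
    (hA : DisjointlyLinked G' W A (insert x S) (S.ncard + 1))
    (hB : DisjointlyLinked G' W B (insert y S) (S.ncard + 1)) :
    DisjointlyLinked G W A B (S.ncard + 1) := by
  classical
  obtain ⟨P, α, hPdisj, hP⟩ :=
    hA.exists_isStrand_to (hS.insert x) (Set.ncard_insert_of_notMem hx hS)
  obtain ⟨Q, β, hQdisj, hQ⟩ :=
    hB.exists_isStrand_to (hS.insert y) (Set.ncard_insert_of_notMem hy hS)
  obtain ⟨l, hly, hlS⟩ : ∃ l : V → V, l y = x ∧ ∀ t ∈ S, l t = t :=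
    ⟨Function.update id y x, by simp,
      fun t ht => Function.update_of_ne (ne_of_mem_of_not_mem ht hy) _ _⟩
  have hl : ∀ t ∈ insert y S, l t ∈ insert x S := by grind
  have hdisj : ∀ s ∈ insert y S, ∀ t ∈ insert y S, s ≠ t → Disjoint (P (l s)) (Q t) :=
    fun s hs t ht hst => (hP (l s) (hl s hs)).disjoint_of_separator (hQ t ht) hAB (by grind)
  refine ⟨insert y S, fun t => P (l t) ∪ Q t, Set.ncard_insert_of_notMem hy hS, ?_, ?_⟩
  · intro s hs t ht hst
    exact Set.disjoint_union_left.2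
      ⟨Set.disjoint_union_right.2 ⟨hPdisj (hl s hs) (hl t ht) (by grind), hdisj s hs t ht hst⟩,
        Set.disjoint_union_right.2 ⟨(hdisj t ht s hs hst.symm).symm, hQdisj hs ht hst⟩⟩
  · intro t ht
    obtain ⟨hPW, hPt, hPA, -⟩ := hP (l t) (hl t ht)
    obtain ⟨hQW, hQt, hQB, -⟩ := hQ t ht
    refine ⟨Set.union_subset hPW hQW, α (l t), (hPA.ge rfl).2, β t, (hQB.ge rfl).2, ?_⟩
    have hPl : Linked G (P (l t) ∪ Q t) (α (l t)) (l t) :=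
      (hPt.linked.of_le hG).mono Set.subset_union_left
    have hQl : Linked G (P (l t) ∪ Q t) t (β t) :=
      (hQt.linked.of_le hG).symm.mono Set.subset_union_right
    rcases ht with rfl | ht
    · exact (hPl.trans_adj (hly.symm ▸ hxy) hQl.left_mem).trans hQl
    · simp only [hlS t ht] at hPl hQl ⊢
      exact hPl.trans hQl

theorem RobustlyLinked.le_ncard_insert (h : RobustlyLinked G W A B k) (hx : x ∈ W) (hS : S ⊆ W)
    (hAB : ∀ a ∈ A, ∀ b ∈ B, ¬ Linked (G.deleteEdges {s(x, y)}) (W \ S) a b) :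
    k ≤ (insert x S).ncard := by
  by_contra! hlt
  obtain ⟨a, ha, b, hb, hab⟩ := h _ (Set.insert_subset hx hS) hlt
  have hxS : x ∉ W \ insert x S := fun hx => hx.2 (.inl rfl)
  rcases hab.deleteEdges_singleton x y with hab | ⟨hax, -⟩ | ⟨-, hxb⟩
  · exact hAB a ha b hb (hab.mono (Set.sdiff_subset_sdiff_right (Set.subset_insert x S)))
  · exact hxS hax.right_mem
  · exact hxS hxb.left_mem

theorem RobustlyLinked.disjointlyLinked_of_separator (h : RobustlyLinked G W A B k)
    (ih : ∀ A B, RobustlyLinked (G.deleteEdges {s(x, y)}) W A B k →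
      DisjointlyLinked (G.deleteEdges {s(x, y)}) W A B k)
    (hxy : G.Adj x y) (hSW : S ⊆ W) (hS : S.Finite) (hSk : S.ncard < k)
    (hAB : ∀ a ∈ A, ∀ b ∈ B, ¬ Linked (G.deleteEdges {s(x, y)}) (W \ S) a b)
    (hAx : ∃ a ∈ A, Linked (G.deleteEdges {s(x, y)}) (W \ S) a x)
    (hyB : ∃ b ∈ B, Linked (G.deleteEdges {s(x, y)}) (W \ S) y b) :
    DisjointlyLinked G W A B k := by
  obtain ⟨a, ha, hax⟩ := hAx
  obtain ⟨b, hb, hyb⟩ := hyB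
  have hx : x ∉ S := hax.right_mem.2
  have hk : k = S.ncard + 1 := by
    have := h.le_ncard_insert hax.right_mem.1 hSW hAB
    rw [Set.ncard_insert_of_notMem hx hS] at this
    omega
  have hA : RobustlyLinked (G.deleteEdges {s(x, y)}) W A (insert x S) k :=
    h.deleteEdges_insert hAB fun a' ha' hay => hAB a' ha' b hb (hay.trans hyb)
  have hB : RobustlyLinked (G.deleteEdges {s(x, y)}) W B (insert y S) k := by
    rw [Sym2.eq_swap] at hAB hax ⊢
    exact h.symm.deleteEdges_insert (fun b' hb' a' ha' hba => hAB a' ha' b' hb' hba.symm)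
      fun b' hb' hbx => hAB a ha b' hb' (hax.trans hbx.symm)
  subst hk
  exact .of_separator (G.deleteEdges_le _) hxy hS hx hyb.left_mem.2 hAB (ih _ _ hA) (ih _ _ hB)

theorem RobustlyLinked.disjointlyLinked_of_deleteEdges (h : RobustlyLinked G W A B k)
    (hW : W.Finite) (hxy : G.Adj x y)
    (ih : ∀ A B, RobustlyLinked (G.deleteEdges {s(x, y)}) W A B k →
      DisjointlyLinked (G.deleteEdges {s(x, y)}) W A B k) :
    DisjointlyLinked G W A B k := by
  by_cases h' : RobustlyLinked (G.deleteEdges {s(x, y)}) W A B k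
  · obtain ⟨T, P, hT, hP, hlink⟩ := ih A B h'
    refine ⟨T, P, hT, hP, fun t ht => ?_⟩
    obtain ⟨hPW, a, ha, b, hb, hab⟩ := hlink t ht
    exact ⟨hPW, a, ha, b, hb, hab.of_le (G.deleteEdges_le _)⟩
  · unfold RobustlyLinked at h'
    push Not at h'
    obtain ⟨S, hSW, hSk, hAB⟩ := h'
    have hS : S.Finite := hW.subset hSW
    obtain ⟨a, ha, b, hb, hab⟩ := h S hSW hSk
    rcases hab.deleteEdges_singleton x y with hab | ⟨hax, hyb⟩ | ⟨hay, hxb⟩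
    · exact absurd hab (hAB a ha b hb)
    · exact h.disjointlyLinked_of_separator ih hxy hSW hS hSk hAB ⟨a, ha, hax⟩ ⟨b, hb, hyb⟩
    · rw [Sym2.eq_swap] at ih hAB hay hxb
      exact h.disjointlyLinked_of_separator ih hxy.symm hSW hS hSk hAB ⟨a, ha, hay⟩ ⟨b, hb, hxb⟩

/-- Göring's proof of Menger's theorem: induction on the number of edges. -/
theorem RobustlyLinked.disjointlyLinked (h : RobustlyLinked G W A B k) (hW : W.Finite) :
    DisjointlyLinked G W A B k := by
  induction hN : {e ∈ W ×ˢ W | G.Adj e.1 e.2}.ncard using Nat.strong_induction_on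
    generalizing G A B with
  | _ N ih =>
  by_cases hadj : ∃ x ∈ W, ∃ y ∈ W, G.Adj x y
  · obtain ⟨x, hx, y, hy, hxy⟩ := hadj
    refine h.disjointlyLinked_of_deleteEdges hW hxy fun A B h' => ih _ ?_ h' rfl
    rw [← hN]
    refine Set.ncard_lt_ncard (Set.ssubset_iff_of_subset ?_ |>.2 ?_)
      ((hW.prod hW).subset (Set.sep_subset _ _))
    · exact fun e he => ⟨he.1, G.deleteEdges_le _ he.2⟩
    · exact ⟨(x, y), ⟨⟨hx, hy⟩, hxy⟩, fun he => by simp at he⟩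
  · exact disjointlyLinked_of_forall_not_adj h fun u hu v hv huv => hadj ⟨u, hu, v, hv, huv⟩

/-! ### Two-vertex separators of anchored graphs -/

/-- In `G[W]`, deleting a vertex never cuts off another one from both `a` and `b`. For
`a, b ∈ W` this says that `G[W]` together with the edge `ab` is 2-connected. -/
def Anchored (G : SimpleGraph V) (W : Set V) (a b : V) : Prop :=
  ∀ w, ∀ v ∈ W, v ≠ w → Linked G (W \ {w}) v a ∨ Linked G (W \ {w}) v b

/-- `K` sends no edges of `G[W]` outside `K ∪ S`. -/
def AttachedAt (G : SimpleGraph V) (W K S : Set V) : Prop :=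
  ∀ u ∈ K, ∀ v ∈ W, G.Adj u v → v ∈ K ∪ S

theorem Anchored.symm (h : Anchored G W a b) : Anchored G W b a :=
  fun w v hv hvw => (h w v hv hvw).symm

theorem IsPathSet.exists_append_ear_append (hD : IsPathSet G D a u) (hE : IsPathSet G E u b)
    (hDE : D ∩ E = {u}) (hR : IsPathSet G R u v) (hv : v ∈ E) (huv : u ≠ v)
    (hRDE : R ∩ (D ∪ E) ⊆ {u, v}) : ∃ Q ⊆ D ∪ E ∪ R, IsPathSet G Q a b ∧ R ⊆ Q := by
  obtain ⟨E₁, E₂, hE₁, hE₂, rfl, hE₁₂⟩ := hE.split hv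
  have huE₂ : u ∉ E₂ := fun hu => huv (hE₁₂.le ⟨hE₁.linked.left_mem, hu⟩)
  have hvD : v ∉ D := fun hvD => huv (hDE.le ⟨hvD, hv⟩ : v = u).symm
  have hDR : D ∩ R ⊆ {u} := fun z hz =>
    (hRDE ⟨hz.2, .inl hz.1⟩).resolve_right fun hzv => hvD (hzv ▸ hz.1)
  have hDRE₂ : (D ∪ R) ∩ E₂ ⊆ {v} := by
    rintro z ⟨hzD | hzR, hzE₂⟩
    · exact (huE₂ ((hDE.le ⟨hzD, .inr hzE₂⟩ : z = u) ▸ hzE₂)).elim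
    · exact (hRDE ⟨hzR, .inr (.inr hzE₂)⟩).resolve_left fun hzu => huE₂ (hzu ▸ hzE₂)
  exact ⟨D ∪ R ∪ E₂, by grind, (hD.append hR hDR).append hE₂ hDRE₂, by grind⟩

theorem IsPathSet.exists_append_ear (hP : IsPathSet G P a b) (hR : IsPathSet G R u v)
    (hu : u ∈ P) (hv : v ∈ P) (huv : u ≠ v) (hRP : R ∩ P ⊆ {u, v}) :
    ∃ Q ⊆ P ∪ R, IsPathSet G Q a b ∧ R ⊆ Q := by
  obtain ⟨D, E, hD, hE, rfl, hDE⟩ := hP.split hu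
  rcases hv with hv | hv
  · rw [Set.union_comm D] at hRP ⊢
    rw [Set.inter_comm] at hDE
    obtain ⟨Q, hQ, hQba, hRQ⟩ := hE.symm.exists_append_ear_append hD.symm hDE hR hv huv hRP
    exact ⟨Q, hQ, hQba.symm, hRQ⟩
  · exact hD.exists_append_ear_append hE hDE hR hv huv hRP

theorem Anchored.exists_isPathSet_of_adj_left (h : Anchored G W a b) (ha : a ∈ W) (hv : v ∈ W)
    (hav : G.Adj a v) : ∃ P ⊆ W, IsPathSet G P a b ∧ v ∈ P := by
  have hvb : Linked G (W \ {a}) v b :=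
    (h a v hv hav.ne').resolve_left fun hva => hva.right_mem.2 rfl
  obtain ⟨P, hP, hvP⟩ := hvb.exists_isPathSet_subset
  refine ⟨{a, v} ∪ P, by grind, (isPathSet_of_adj hav).append hvP ?_, by simp⟩
  grind

theorem Anchored.exists_isPathSet_of_adj (h : Anchored G W a b) (hP : IsPathSet G P a b)
    (hPW : P ⊆ W) (hu : u ∈ P) (hv : v ∈ W) (huv : G.Adj u v) :
    ∃ P ⊆ W, IsPathSet G P a b ∧ v ∈ P := by
  by_cases hvP : v ∈ P
  · exact ⟨P, hPW, hP, hvP⟩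
  obtain ⟨z, hz, hvz⟩ : ∃ z ∈ P, Linked G (W \ {u}) v z := by
    rcases h u v hv huv.ne' with hva | hvb
    exacts [⟨a, hP.linked.left_mem, hva⟩, ⟨b, hP.linked.right_mem, hvb⟩]
  obtain ⟨R, hRW, x, rfl, z, hzP, hR, -, hRP⟩ := hvz.exists_isPathSet (Set.mem_singleton v) hz
  have hzu : u ≠ z := fun huz => (hRW hR.linked.right_mem).2 huz.symm
  have huR : IsPathSet G ({u, x} ∪ R) u z := (isPathSet_of_adj huv).append hR (by grind)
  obtain ⟨Q, hQ, hQab, hRQ⟩ := hP.exists_append_ear huR hu hzP hzu (by grind)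
  exact ⟨Q, by grind, hQab, by grind⟩

theorem Anchored.exists_isPathSet (h : Anchored G W a b) (ha : a ∈ W) (hb : b ∈ W) (hv : v ∈ W)
    (hva : v ≠ a) (hvb : v ≠ b) : ∃ P ⊆ W, IsPathSet G P a b ∧ v ∈ P := by
  have covered_of_walk : ∀ (u : V) (p : G.Walk u b), (∀ x ∈ p.support, x ∈ W) →
      u = a ∨ u = b ∨ ∃ P ⊆ W, IsPathSet G P a b ∧ u ∈ P := by
    intro u p hp
    induction p with
    | nil => exact .inr (.inl rfl)
    | @cons u x b hux p ih =>
      have hu : u ∈ W := hp u (by simp)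
      refine .inr (.inr ?_)
      rcases ih h hb hvb fun y hy => hp y (by simp [hy]) with rfl | rfl | ⟨P, hPW, hP, hxP⟩
      · exact h.exists_isPathSet_of_adj_left ha hu hux.symm
      · obtain ⟨P, hPW, hP, huP⟩ := h.symm.exists_isPathSet_of_adj_left hb hu hux.symm
        exact ⟨P, hPW, hP.symm, huP⟩
      · exact h.exists_isPathSet_of_adj hP hPW hxP hu hux.symm
  obtain ⟨p, hp⟩ : Linked G (W \ {a}) v b :=
    (h a v hv hva).resolve_left fun hva => hva.right_mem.2 rfl
  exact ((covered_of_walk v p fun x hx => (hp x hx).1).resolve_left hva).resolve_left hvb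

theorem Anchored.longPath_two (h : Anchored G W a b) (ha : a ∈ W) (hb : b ∈ W)
    (hthird : ∃ v ∈ W, v ≠ a ∧ v ≠ b) : LongPath G W 2 a b := by
  obtain ⟨v, hv, hva, hvb⟩ := hthird
  obtain ⟨P, hPW, hP, hvP⟩ := h.exists_isPathSet ha hb hv hva hvb
  obtain ⟨D, E, hD, hE, rfl, hDE⟩ := hP.split hvP
  exact ((hD.longPath_one hva.symm).append (hE.longPath_one hvb) hDE.le).mono hPW le_rfl

theorem AttachedAt.not_linked (h : AttachedAt G W K S) (hu : u ∈ K) (hv : v ∉ K) :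
    ¬ Linked G (W \ S) u v := by
  intro huv
  obtain ⟨x, hx, y, hy, hxy⟩ := huv.exists_adj_of_mem_of_notMem hu hv
  exact (h x hx.2 y hy.1.1 hxy).elim hy.2 hy.1.2

theorem AttachedAt.compl (h : AttachedAt G W K S) : AttachedAt G W (W \ (K ∪ S)) S := by
  intro u hu v hv huv
  by_cases hvS : v ∈ S
  · exact .inr hvS
  · refine .inl ⟨hv, ?_⟩
    rintro (hvK | hvS')
    exacts [hu.2 (h v hvK u hu.1 huv.symm), hvS hvS']

theorem AttachedAt.exists_linked (h : AttachedAt G W K S) (hu : u ∈ K) (hv : v ∉ K) (hAW : A ⊆ W)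
    (huv : Linked G A u v) : ∃ s ∈ S, Linked G (A ∩ (K ∪ S)) u s := by
  have not_linked : ∀ z ∉ K, ¬ Linked G (A \ S) u z := fun z hz huz =>
    h.not_linked hu hz (huz.mono (Set.sdiff_subset_sdiff_left hAW))
  obtain ⟨s, hs, hus⟩ := (huv.hits_or_avoids S).resolve_right (not_linked v hv)
  obtain ⟨P, hPA, x, rfl, s, hs, hP, -, hPS⟩ := hus.exists_isPathSet (Set.mem_singleton u) hs
  refine ⟨s, hs, hP.linked.mono fun z hz => ⟨hPA hz, ?_⟩⟩
  by_contra! hzKS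
  exact not_linked z (fun hzK => hzKS (.inl hzK))
    ((hP.linked_diff subset_rfl hPS hz fun hzS => hzKS (.inr hzS)).mono
      (Set.sdiff_subset_sdiff_left hPA))

theorem AttachedAt.anchored (h : AttachedAt G W K {s, t}) (hW : Anchored G W a b) (hKW : K ⊆ W)
    (ha : a ∉ K) (hb : b ∉ K) : Anchored G (K ∪ {s, t}) s t := by
  intro w v hv hvw
  rcases hv with hv | rfl | rfl
  · obtain ⟨c, hc, hvc⟩ : ∃ c ∉ K, Linked G (W \ {w}) v c :=
      (hW w v (hKW hv) hvw).elim (⟨a, ha, ·⟩) (⟨b, hb, ·⟩)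
    obtain ⟨z, hz, hvz⟩ := h.exists_linked hv hc Set.sdiff_subset hvc
    have hvz : Linked G ((K ∪ {s, t}) \ {w}) v z := hvz.mono fun x hx => ⟨hx.2, hx.1.2⟩
    rcases hz with rfl | rfl
    exacts [.inl hvz, .inr hvz]
  · exact .inl (.refl ⟨by simp, hvw⟩)
  · exact .inr (.refl ⟨by simp, hvw⟩)

theorem Anchored.linked_of_ncard_lt_two (h : Anchored G W a b) (hS : S.Finite) (hS2 : S.ncard < 2)
    (hv : v ∈ W) (hvS : v ∉ S) : Linked G (W \ S) v a ∨ Linked G (W \ S) v b := by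
  by_cases hva : v = a
  · exact .inl (hva ▸ .refl ⟨hv, hvS⟩)
  obtain ⟨w, hwv, hSw⟩ : ∃ w, v ≠ w ∧ S ⊆ {w} := by
    rcases S.eq_empty_or_nonempty with rfl | hne
    · exact ⟨a, hva, Set.empty_subset _⟩
    · obtain ⟨w, rfl⟩ := Set.ncard_eq_one.1
        (le_antisymm (Nat.le_of_lt_succ hS2) ((Set.ncard_pos hS).2 hne))
      exact ⟨w, hvS, subset_rfl⟩
  have hsub : W \ {w} ⊆ W \ S := Set.sdiff_subset_sdiff_right hSw
  exact (h w v hv hwv).imp (.mono · hsub) (.mono · hsub)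

theorem AttachedAt.robustlyLinked (h : AttachedAt G W K {s, t}) (hW : Anchored G W a b)
    (hfin : W.Finite) (hKW : K ⊆ W \ {a, b}) (hK : K.Nonempty) (hs : s ∉ K) (ht : t ∉ K) :
    RobustlyLinked G (W \ K) {a, b} {s, t} 2 := by
  intro S hSW hS2
  obtain ⟨v, hv⟩ := hK
  obtain ⟨c, hc, hvc⟩ : ∃ c ∈ ({a, b} : Set V), Linked G (W \ S) v c :=
    (hW.linked_of_ncard_lt_two (hfin.subset (hSW.trans Set.sdiff_subset)) hS2 (hKW hv).1
      fun hvS => (hSW hvS).2 hv).elim (⟨a, by simp, ·⟩) (⟨b, by simp, ·⟩)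
  have hcK : c ∉ K := fun hcK => (hKW hcK).2 hc
  refine ⟨c, hc, ?_⟩
  by_cases hcst : c ∈ ({s, t} : Set V)
  · exact ⟨c, hcst, .refl ⟨⟨hvc.right_mem.1, hcK⟩, hvc.right_mem.2⟩⟩
  · obtain ⟨z, hz, hcz⟩ := h.compl.exists_linked ⟨hvc.right_mem.1, by simp_all⟩
      (fun hvK => hvK.2 (.inl hv)) Set.sdiff_subset hvc.symm
    refine ⟨z, hz, hcz.mono ?_⟩
    grind

theorem AttachedAt.longPath (h : AttachedAt G W K {s, t}) (hW : Anchored G W a b)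
    (hfin : W.Finite) (hKW : K ⊆ W \ {a, b}) (hK : K.Nonempty) (hs : s ∈ W \ K) (ht : t ∈ W \ K)
    (hst : s ≠ t) (hpath : LongPath G (K ∪ {s, t}) n s t) : LongPath G W n a b := by
  obtain ⟨P, x, hdisj, hP⟩ :=
    (h.robustlyLinked hW hfin hKW hK hs.2 ht.2).disjointlyLinked (hfin.subset Set.sdiff_subset)
      |>.exists_isStrand_to (Set.toFinite _) (Set.ncard_pair hst)
  obtain ⟨hsW, hsP, hsa, hss⟩ := hP s (by simp)
  obtain ⟨htW, htP, hta, htt⟩ := hP t (by simp)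
  have hPst : Disjoint (P s) (P t) := hdisj (by simp) (by simp) hst
  have hsK : P s ∩ (K ∪ {s, t}) ⊆ {s} := by
    rintro z ⟨hz, hzK | hzst⟩
    exacts [((hsW hz).2 hzK).elim, hss.le ⟨hz, hzst⟩]
  have htK : (P s ∪ (K ∪ {s, t})) ∩ P t ⊆ {t} := by
    rintro z ⟨hzs | hzK | hzst, hz⟩
    exacts [(hPst.le_bot ⟨hzs, hz⟩).elim, ((htW hz).2 hzK).elim, htt.le ⟨hz, hzst⟩]
  have hpath : LongPath G W n (x s) (x t) :=
    ((hsP.linked.longPath.append hpath hsK).append htP.linked.symm.longPath htK).mono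
      (by grind) (by simp)
  have hxs : x s ∈ P s ∩ {a, b} := hsa ▸ rfl
  have hxt : x t ∈ P t ∩ {a, b} := hta ▸ rfl
  have hxne : x s ≠ x t := hPst.ne_of_mem hxs.1 hxt.1
  rcases hxs.2 with hs | hs <;> rcases hxt.2 with ht | ht
  · exact (hxne (hs.trans ht.symm)).elim
  · exact hs ▸ ht ▸ hpath
  · exact hs ▸ ht ▸ hpath.symm
  · exact (hxne (hs.trans ht.symm)).elim

/-! ### Leaf blocks -/

/-- Finite vertex sets `W` with terminals `a`, `b` in which a long `a`–`b` path is sought: `G[W]`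
with the edge `ab` added is 2-connected, and all degrees of `G[W]` off `a`, `b` are at least `d`. -/
structure Host (G : SimpleGraph V) (d : ℕ) (W : Set V) (a b : V) : Prop where
  finite : W.Finite
  left_mem : a ∈ W
  right_mem : b ∈ W
  ne : a ≠ b
  third : ∃ v ∈ W, v ≠ a ∧ v ≠ b
  anchored : Anchored G W a b
  degree : ∀ v ∈ W, v ≠ a → v ≠ b → d ≤ (G.neighborSet v ∩ W).ncard

/-- In every subgraph `G[W]` as in `Host G d`, the terminals are joined by a path of length at
least `n`. -/
def DegreeForcesPath (G : SimpleGraph V) (d n : ℕ) : Prop :=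
  ∀ ⦃W : Set V⦄ ⦃a b : V⦄, Host G d W a b → LongPath G W n a b

/-- `G[A]` is connected or empty. -/
def ConnectedOn (G : SimpleGraph V) (A : Set V) : Prop :=
  ∀ u ∈ A, ∀ v ∈ A, Linked G A u v

/-- `G[B]` has no cutvertex. -/
def Biconnected (G : SimpleGraph V) (B : Set V) : Prop :=
  ∀ w, ConnectedOn G (B \ {w})

/-- Any two vertices of `B` are joined by a path of `G[B]` of length at least `n`. -/
def Traversable (G : SimpleGraph V) (B : Set V) (n : ℕ) : Prop :=
  ∀ u ∈ B, ∀ v ∈ B, u ≠ v → LongPath G B n u v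

/-- The vertex set of the component of `x` in `G[A]`, empty if `x ∉ A`. -/
def component (G : SimpleGraph V) (A : Set V) (x : V) : Set V :=
  {y | Linked G A x y}

theorem component_subset : component G A x ⊆ A :=
  fun _ hy => hy.right_mem

theorem attachedAt_component : AttachedAt G W (component G (W \ S) x) S := by
  intro u hu v hv huv
  by_cases hvS : v ∈ S
  exacts [.inr hvS, .inl (hu.trans_adj huv ⟨hv, hvS⟩)]

theorem linked_component (hy : y ∈ component G A x) : Linked G (component G A x) x y := by
  classical
  obtain ⟨p, hp⟩ := hy
  exact ⟨p, fun z hz => ⟨p.takeUntil z hz, fun v hv =>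
    hp v (p.support_takeUntil_subset_support hz hv)⟩⟩

theorem connectedOn_component : ConnectedOn G (component G A x) :=
  fun _ hu _ hv => (linked_component hu).symm.trans (linked_component hv)

theorem Host.longPath_two (h : Host G d W a b) : LongPath G W 2 a b :=
  h.anchored.longPath_two h.left_mem h.right_mem h.third

theorem AttachedAt.host (h : AttachedAt G W K {s, t}) (hW : Anchored G W a b)
    (hfin : K.Finite) (hKW : K ⊆ W \ {a, b}) (hK : K.Nonempty) (hs : s ∈ W \ K) (ht : t ∈ W \ K)
    (hst : s ≠ t) (hdeg : ∀ v ∈ K, d ≤ (G.neighborSet v ∩ W).ncard) :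
    Host G d (K ∪ {s, t}) s t where
  finite := hfin.union (Set.toFinite _)
  left_mem := by simp
  right_mem := by simp
  ne := hst
  third := hK.imp fun v hv => ⟨.inl hv, ne_of_mem_of_not_mem hv hs.2, ne_of_mem_of_not_mem hv ht.2⟩
  anchored := h.anchored hW (hKW.trans Set.sdiff_subset) (fun ha => (hKW ha).2 (by simp))
    fun hb => (hKW hb).2 (by simp)
  degree v hv hvs hvt := by
    have hvK : v ∈ K := hv.resolve_right (by simp [hvs, hvt])
    exact (hdeg v hvK).trans (Set.ncard_le_ncard (fun z hz => ⟨hz.1, h v hvK z hz.2 hz.1⟩)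
      ((hfin.union (Set.toFinite _)).inter_of_right _))

theorem DegreeForcesPath.longPath_of_attachedAt (hforce : DegreeForcesPath G d n)
    (h : AttachedAt G W K {s, t}) (hW : Anchored G W a b)
    (hfin : W.Finite) (hKW : K ⊆ W \ {a, b}) (hK : K.Nonempty) (hs : s ∈ W \ K) (ht : t ∈ W \ K)
    (hst : s ≠ t) (hdeg : ∀ v ∈ K, d ≤ (G.neighborSet v ∩ W).ncard) : LongPath G W n a b :=
  h.longPath hW hfin hKW hK hs ht hst
    (hforce (h.host hW (hfin.subset (hKW.trans Set.sdiff_subset)) hKW hK hs ht hst hdeg))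

theorem Biconnected.anchored (h : Biconnected G B) (hu : u ∈ B) (hv : v ∈ B) (huv : u ≠ v) :
    Anchored G B u v := by
  intro w z hz hzw
  by_cases huw : u = w
  · exact .inr (h w z ⟨hz, hzw⟩ v ⟨hv, huw ▸ huv.symm⟩)
  · exact .inl (h w z ⟨hz, hzw⟩ u ⟨hu, huw⟩)

theorem Biconnected.longPath_of_subset_triple (hB : Biconnected G B) (hdn : d ≤ 1 → n ≤ 2)
    (hu : u ∈ B) (hv : v ∈ B) (hc : c ∈ B) (huv : u ≠ v) (hcu : c ≠ u) (hcv : c ≠ v)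
    (hB3 : B ⊆ {u, v, c}) (hdeg : d + 1 ≤ (G.neighborSet u ∩ B).ncard) : LongPath G B n u v := by
  have hN : G.neighborSet u ∩ B ⊆ {v, c} := fun z hz => (hB3 hz.2).resolve_left hz.1.ne'
  have hd : d + 1 ≤ 2 := hdeg.trans ((Set.ncard_le_ncard hN).trans_eq (Set.ncard_pair hcv.symm))
  exact ((hB.anchored hu hv huv).longPath_two hu hv ⟨c, hc, hcu, hcv⟩).mono subset_rfl
    (hdn (by omega))

theorem DegreeForcesPath.longPath_of_exceptional (h : DegreeForcesPath G d n)
    (hB : Biconnected G B) (hfin : B.Finite) (hu : u ∈ B) (hv : v ∈ B) (hc : c ∈ B) (huv : u ≠ v)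
    (hcu : c ≠ u) (hcv : c ≠ v) (hx : x ∈ B) (hxuvc : x ∉ ({u, v, c} : Set V))
    (hdeg : ∀ z ∈ B, z ≠ c → d + 1 ≤ (G.neighborSet z ∩ B).ncard) : LongPath G B n u v := by
  by_cases hanch : Anchored G (B \ {c}) u v
  · refine (h ⟨hfin.subset Set.sdiff_subset, ⟨hu, hcu.symm⟩, ⟨hv, hcv.symm⟩, huv,
      ⟨x, by grind⟩, hanch, fun z hz _ _ => ?_⟩).mono Set.sdiff_subset le_rfl
    have hNz := Set.pred_ncard_le_ncard_sdiff_singleton (G.neighborSet z ∩ B) c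
    rw [← Set.inter_sdiff_assoc]
    have := hdeg z hz.1 hz.2
    omega
  · unfold Anchored at hanch
    push Not at hanch
    obtain ⟨w, z, hz, hzw, hzu, hzv⟩ := hanch
    have hBc : (B \ {c}) \ {w} = B \ {c, w} := by rw [Set.sdiff_sdiff, Set.singleton_union]
    have hwB : w ∈ B \ {c} := by
      by_contra hw
      rw [Set.sdiff_singleton_eq_self hw] at hzu
      exact hzu (hB c z hz u ⟨hu, hcu.symm⟩)
    rw [hBc] at hzu hzv
    refine h.longPath_of_attachedAt attachedAt_component (hB.anchored hu hv huv) hfin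
      (K := component G (B \ {c, w}) z) (s := c) (t := w) (fun y hy => ⟨hy.right_mem.1, ?_⟩)
      ⟨z, .refl (by grind)⟩ ⟨hc, fun hcK => hcK.right_mem.2 (by simp)⟩
      ⟨hwB.1, fun hwK => hwK.right_mem.2 (by simp)⟩ (Ne.symm hwB.2) fun y hy => ?_
    · rintro (rfl | rfl)
      exacts [hzu hy, hzv hy]
    · have hyB := hy.right_mem
      exact (Nat.le_succ d).trans (hdeg y hyB.1 (by grind))

theorem DegreeForcesPath.traversable (h : DegreeForcesPath G d n) (hdn : d ≤ 1 → n ≤ 2)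
    (hB : Biconnected G B) (hfin : B.Finite) (hB3 : 2 < B.ncard)
    (hdeg : ∀ z ∈ B, z ≠ c → d + 1 ≤ (G.neighborSet z ∩ B).ncard) : Traversable G B n := by
  intro u hu v hv huv
  by_cases hc : c ∈ B ∧ c ≠ u ∧ c ≠ v
  · obtain ⟨hc, hcu, hcv⟩ := hc
    by_cases hBuvc : B ⊆ {u, v, c}
    · exact hB.longPath_of_subset_triple hdn hu hv hc huv hcu hcv hBuvc (hdeg u hu hcu.symm)
    · obtain ⟨x, hx, hxuvc⟩ := Set.not_subset.1 hBuvc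
      exact h.longPath_of_exceptional hB hfin hu hv hc huv hcu hcv hx hxuvc hdeg
  · obtain ⟨x, hx, hxuv⟩ := Set.exists_mem_notMem_of_ncard_lt_ncard
      ((Set.ncard_pair huv).trans_lt hB3)
    exact h ⟨hfin, hu, hv, huv, ⟨x, hx, by grind⟩, hB.anchored hu hv huv,
      fun z hz hzu hzv => (Nat.le_succ d).trans (hdeg z hz (by grind))⟩

/-- `Z` is a nonempty part of `G[C]` off `a` that the single vertex `s` cuts off from the rest. -/
structure IsLobe (G : SimpleGraph V) (C : Set V) (a s : V) (Z : Set V) : Prop where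
  nonempty : Z.Nonempty
  subset : Z ⊆ C
  root_notMem : a ∉ Z
  cut_mem : s ∈ C \ Z
  attachedAt : AttachedAt G C Z {s}

theorem exists_isLobe_of_not_biconnected (hC : ConnectedOn G C) (h : ¬ Biconnected G C) (a : V) :
    ∃ s Z, IsLobe G C a s Z := by
  unfold Biconnected ConnectedOn at h
  push Not at h
  obtain ⟨s, u, hu, v, hv, huv⟩ := h
  have hs : s ∈ C := by
    by_contra hs
    rw [Set.sdiff_singleton_eq_self hs] at hu hv huv
    exact huv (hC u hu v hv)
  obtain ⟨z, hz, hza⟩ : ∃ z ∈ C \ {s}, ¬ Linked G (C \ {s}) z a := by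
    by_contra! hlink
    exact huv ((hlink u hu).trans (hlink v hv).symm)
  exact ⟨s, component G (C \ {s}) z, ⟨z, .refl hz⟩, component_subset.trans Set.sdiff_subset, hza,
    ⟨hs, fun hsZ => hsZ.right_mem.2 rfl⟩, attachedAt_component⟩

theorem IsLobe.linked_cut (h : IsLobe G C a s Z) (hC : ConnectedOn G C) (hz : z ∈ Z) :
    Linked G (insert s Z) z s := by
  obtain ⟨s, rfl, hzs⟩ := h.attachedAt.exists_linked hz h.cut_mem.2 subset_rfl
    (hC z (h.subset hz) s h.cut_mem.1)
  exact hzs.mono (by grind)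

theorem IsLobe.isLobe_component (h : IsLobe G C a s Z) (hz : z ∈ Z) (hw : w ∈ C)
    (hzw : z ≠ w) (hsw : s ∉ component G (insert s Z \ {w}) z) :
    IsLobe G C a w (component G (insert s Z \ {w}) z) := by
  have hsub : component G (insert s Z \ {w}) z ⊆ Z := fun y hy =>
    hy.right_mem.1.resolve_left fun hys => hsw (hys ▸ hy)
  refine ⟨⟨z, .refl ⟨.inr hz, hzw⟩⟩, hsub.trans h.subset, fun ha => h.root_notMem (hsub ha),
    ⟨hw, fun hwK => hwK.right_mem.2 rfl⟩, fun u hu v hv huv => ?_⟩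
  by_cases hvw : v = w
  · exact .inr hvw
  · refine .inl (hu.trans_adj huv ⟨?_, hvw⟩)
    rcases h.attachedAt u (hsub hu) v hv huv with hvZ | rfl
    exacts [.inr hvZ, .inl rfl]

theorem IsLobe.biconnected_insert (h : IsLobe G C a s Z) (hC : ConnectedOn G C)
    (hmin : ∀ s' Z', IsLobe G C a s' Z' → Z' ⊆ Z → Z' = Z) : Biconnected G (insert s Z) := by
  intro w
  by_cases hw : w = s
  · subst hw
    have hdiff : insert w Z \ {w} = Z := Set.insert_sdiff_self_of_notMem h.cut_mem.2
    intro u hu v hv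
    rw [hdiff] at hu hv
    have hcomp := h.isLobe_component hu h.cut_mem.1 (ne_of_mem_of_not_mem hu h.cut_mem.2)
      fun hw => hw.right_mem.2 rfl
    have hZ := hmin _ _ hcomp (component_subset.trans hdiff.le)
    exact hZ.ge hv
  · suffices hlink : ∀ z ∈ Z, z ≠ w → Linked G (insert s Z \ {w}) z s by
      have hlink' : ∀ z ∈ insert s Z \ {w}, Linked G (insert s Z \ {w}) z s := by
        rintro z ⟨rfl | hz, hzw⟩
        exacts [.refl ⟨.inl rfl, hzw⟩, hlink z hz hzw]
      exact fun u hu v hv => (hlink' u hu).trans (hlink' v hv).symm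
    intro z hz hzw
    by_contra hzs
    by_cases hwZ : w ∈ Z
    · have hcomp := h.isLobe_component hz (h.subset hwZ) hzw hzs
      have hZ := hmin _ _ hcomp fun y hy =>
        hy.right_mem.1.resolve_left fun hys => hzs (hys ▸ hy)
      exact hcomp.cut_mem.2 (hZ.ge hwZ)
    · rw [Set.sdiff_singleton_eq_self (by grind)] at hzs
      exact hzs (h.linked_cut hC hz)

theorem two_lt_ncard_of_two_le_ncard_neighborSet_inter (hfin : B.Finite) (hv : v ∈ B)
    (hdeg : 2 ≤ (G.neighborSet v ∩ B).ncard) : 2 < B.ncard :=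
  hdeg.trans_lt (Set.ncard_lt_ncard ⟨Set.inter_subset_right, fun h => G.irrefl (h hv).1⟩ hfin)

/-- `B` is a block of `G[C]` in which at most the vertex `c` has neighbours in `C` outside `B`,
and `a` is not one of the other vertices of `B`. -/
structure IsLeafBlock (G : SimpleGraph V) (C : Set V) (a c : V) (B : Set V) : Prop where
  subset : B ⊆ C
  biconnected : Biconnected G B
  two_lt_ncard : 2 < B.ncard
  neighborSet_inter_subset : ∀ v ∈ B, v ≠ c → G.neighborSet v ∩ C ⊆ B
  eq_of_mem : a ∈ B → a = c

theorem exists_isLeafBlock (hfin : C.Finite) (hC : ConnectedOn G C) (hx : x ∈ C) (hxa : x ≠ a)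
    (hdeg : ∀ v ∈ C, v ≠ a → 2 ≤ (G.neighborSet v ∩ C).ncard) :
    ∃ c B, IsLeafBlock G C a c B := by
  by_cases hbi : Biconnected G C
  · exact ⟨a, C, subset_rfl, hbi,
      two_lt_ncard_of_two_le_ncard_neighborSet_inter hfin hx (hdeg x hx hxa),
      fun _ _ _ => Set.inter_subset_right, fun _ => rfl⟩
  obtain ⟨Z, ⟨s, hZ⟩, hmin⟩ :=
    (hfin.finite_subsets.subset fun Z hZ => hZ.choose_spec.subset).exists_minimal
      (s := {Z | ∃ s, IsLobe G C a s Z})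
      (let ⟨s, Z, hZ⟩ := exists_isLobe_of_not_biconnected hC hbi a; ⟨Z, s, hZ⟩)
  obtain ⟨z, hz⟩ := hZ.nonempty
  have hsub : insert s Z ⊆ C := Set.insert_subset hZ.cut_mem.1 hZ.subset
  have hN : ∀ v ∈ Z, G.neighborSet v ∩ C ⊆ insert s Z := fun v hv y hy =>
    (hZ.attachedAt v hv y hy.2 hy.1).symm
  refine ⟨s, insert s Z, hsub, hZ.biconnected_insert hC fun s' Z' hZ' hsub =>
      hsub.antisymm (hmin ⟨s', hZ'⟩ hsub), ?_,
    fun v hv hvs => hN v (hv.resolve_left hvs), fun ha => ha.resolve_right hZ.root_notMem⟩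
  refine two_lt_ncard_of_two_le_ncard_neighborSet_inter (hfin.subset hsub) (.inr hz)
    ((hdeg z (hZ.subset hz) (ne_of_mem_of_not_mem hz hZ.root_notMem)).trans
      (Set.ncard_le_ncard (fun y hy => ⟨hy.1, hN z hz hy⟩)
        ((hfin.subset hsub).inter_of_right _)))

theorem IsLeafBlock.traversable (hB : IsLeafBlock G C a c B) (hforce : DegreeForcesPath G d n)
    (hdn : d ≤ 1 → n ≤ 2) (hfin : C.Finite)
    (hdeg : ∀ v ∈ C, v ≠ a → d + 1 ≤ (G.neighborSet v ∩ C).ncard) : Traversable G B n := by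
  have hBfin : B.Finite := hfin.subset hB.subset
  refine hforce.traversable hdn hB.biconnected hBfin hB.two_lt_ncard (c := c)
    fun v hv hvc => (hdeg v (hB.subset hv) ?_).trans (Set.ncard_le_ncard
      (fun y hy => ⟨hy.1, hB.neighborSet_inter_subset v hv hvc hy⟩) (hBfin.inter_of_right _))
  rintro rfl
  exact hvc (hB.eq_of_mem hv)

/-! ### Routing through three disjoint paths -/

/-- `G[A]` links `u` to a vertex of `B`, which is the only vertex of `A` in `B ∪ B'`. -/
def Reaches (G : SimpleGraph V) (A B B' : Set V) (u : V) : Prop :=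
  ∃ z, Linked G A u z ∧ A ∩ B = {z} ∧ Disjoint A B'

theorem Reaches.mem (h : Reaches G A B B' u) : u ∈ A :=
  h.choose_spec.1.left_mem

theorem IsStrand.reaches_left (h : IsStrand G W B B' P x y) (hS : IsPathSet G S x p)
    (hSP : S ⊆ P) (hy : y ∉ S) : Reaches G S B B' p := by
  refine ⟨x, hS.linked.symm, ?_, Set.disjoint_left.2 fun z hzS hzB' => ?_⟩
  · exact (Set.inter_subset_inter_left B hSP).trans h.inter_left.le |>.antisymm
      (Set.singleton_subset_iff.2 ⟨hS.linked.left_mem, h.left_mem.2⟩)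
  · exact hy ((h.inter_right.le ⟨hSP hzS, hzB'⟩ : z = y) ▸ hzS)

theorem IsStrand.exists_reaches (h : IsStrand G W B B' P x y) (hp : p ∈ P) (hpB' : p ∉ B') :
    ∃ D ⊆ P, Reaches G D B B' p := by
  obtain ⟨S, T, hS, hT, rfl, hST⟩ := h.isPathSet.split hp
  refine ⟨S, Set.subset_union_left, h.reaches_left hS Set.subset_union_left fun hy => hpB' ?_⟩
  exact (hST.le ⟨hy, hT.linked.right_mem⟩ : y = p) ▸ h.right_mem.2

theorem IsStrand.exists_reaches_of_split (h : IsStrand G W B B' P x y) (hS : IsPathSet G S x p)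
    (hT : IsPathSet G T p y) (hP : S ∪ T = P) (hST : S ∩ T = {p}) (hq : q ∈ T) (hpq : p ≠ q) :
    ∃ D U, D ⊆ P ∧ U ⊆ P ∧ Disjoint D U ∧ Reaches G D B B' p ∧ Reaches G U B' B q := by
  obtain ⟨T₁, T₂, hT₁, hT₂, rfl, hT₁₂⟩ := hT.split hq
  have hST₂ : Disjoint S T₂ := Set.disjoint_left.2 fun z hzS hzT₂ => hpq <| by
    have hzp : z = p := hST.le ⟨hzS, .inr hzT₂⟩
    exact hT₁₂.le ⟨hT₁.linked.left_mem, hzp ▸ hzT₂⟩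
  have hSP : S ⊆ P := hP ▸ Set.subset_union_left
  have hT₂P : T₂ ⊆ P := hP ▸ Set.subset_union_right.trans Set.subset_union_right
  exact ⟨S, T₂, hSP, hT₂P, hST₂,
    h.reaches_left hS hSP fun hy => hST₂.le_bot ⟨hy, hT₂.linked.right_mem⟩,
    h.symm.reaches_left hT₂.symm hT₂P fun hx => hST₂.le_bot ⟨hS.linked.left_mem, hx⟩⟩

theorem IsStrand.exists_reaches_of_ne (h : IsStrand G W B B' P x y) (hp : p ∈ P) (hq : q ∈ P)
    (hpq : p ≠ q) : ∃ D U, D ⊆ P ∧ U ⊆ P ∧ Disjoint D U ∧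
      (Reaches G D B B' p ∧ Reaches G U B' B q ∨ Reaches G D B B' q ∧ Reaches G U B' B p) := by
  obtain ⟨S, T, hS, hT, hP, hST⟩ := h.isPathSet.split hp
  rcases hP.ge hq with hqS | hqT
  · obtain ⟨U, D, hU, hD, hUD, hp, hq⟩ := h.symm.exists_reaches_of_split hT.symm hS.symm
      (Set.union_comm S T ▸ hP) (Set.inter_comm S T ▸ hST) hqS hpq
    exact ⟨D, U, hD, hU, hUD.symm, .inr ⟨hq, hp⟩⟩
  · obtain ⟨D, U, hD, hU, hDU, hpq⟩ := h.exists_reaches_of_split hS hT hP hST hqT hpq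
    exact ⟨D, U, hD, hU, hDU, .inl hpq⟩

/-- The vertex `p` and the members of the family `F` on `T` through it. -/
def lane (T : Set V) (F : V → Set V) (p : V) : Set V :=
  {z | z = p ∨ ∃ t ∈ T, p ∈ F t ∧ z ∈ F t}

theorem disjoint_lane (hF : T.PairwiseDisjoint F) (ht : t ∈ T) (hp : p ∉ F t) :
    Disjoint (lane T F p) (F t) := by
  refine Set.disjoint_left.2 fun z hz hzt => ?_
  obtain rfl | ⟨s, hs, hps, hzs⟩ := hz
  · exact hp hzt
  · exact hp (hF.elim_set hs ht z hzs hzt ▸ hps)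

theorem disjoint_lane_lane (hF : T.PairwiseDisjoint F) (hpq : p ≠ q)
    (h : ∀ t ∈ T, p ∈ F t → q ∉ F t) : Disjoint (lane T F p) (lane T F q) := by
  refine Set.disjoint_right.2 fun z hzq hzp => ?_
  obtain rfl | ⟨t, ht, hqt, hzt⟩ := hzq
  · obtain rfl | ⟨t, ht, hpt, hqt⟩ := hzp
    exacts [hpq rfl, h t ht hpt hqt]
  · exact (disjoint_lane hF ht fun hpt => h t ht hpt hqt).le_bot ⟨hzp, hzt⟩

theorem exists_disjoint_lane (hF : T.PairwiseDisjoint F) (hT : T.ncard = 3) (p q : V) :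
    ∃ t ∈ T, Disjoint (lane T F p ∪ lane T F q) (F t) := by
  obtain ⟨t, ht, hpt, hqt⟩ : ∃ t ∈ T, p ∉ F t ∧ q ∉ F t := by
    obtain ⟨t₁, t₂, t₃, h₁₂, h₁₃, h₂₃, rfl⟩ := Set.ncard_eq_three.1 hT
    have hF₁₂ := Set.disjoint_left.1 (hF (by simp) (by simp) h₁₂ : Disjoint (F t₁) (F t₂))
    have hF₁₃ := Set.disjoint_left.1 (hF (by simp) (by simp) h₁₃ : Disjoint (F t₁) (F t₃))
    have hF₂₃ := Set.disjoint_left.1 (hF (by simp) (by simp) h₂₃ : Disjoint (F t₂) (F t₃))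
    grind
  exact ⟨t, ht, Set.disjoint_union_left.2 ⟨disjoint_lane hF ht hpt, disjoint_lane hF ht hqt⟩⟩

theorem exists_reaches_lane (hF : ∀ t ∈ T, IsStrand G W B B' (F t) (f t) (g t))
    (hp : p ∈ B ∪ B' ∪ ⋃ t ∈ T, F t) (hpB' : p ∉ B') : ∃ D ⊆ lane T F p, Reaches G D B B' p := by
  by_cases hpF : ∃ t ∈ T, p ∈ F t
  · obtain ⟨t, ht, hpt⟩ := hpF
    obtain ⟨D, hD, hpD⟩ := (hF t ht).exists_reaches hpt hpB'
    exact ⟨D, fun z hz => .inr ⟨t, ht, hpt, hD hz⟩, hpD⟩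
  · have hpB : p ∈ B := by simpa [hpB', hpF] using hp
    exact ⟨{p}, fun z hz => .inl hz, p, .refl rfl, by simpa using hpB, by simpa using hpB'⟩

theorem exists_reaches_reaches (hdisj : T.PairwiseDisjoint F)
    (hF : ∀ t ∈ T, IsStrand G W B B' (F t) (f t) (g t)) (hp : p ∈ B ∪ B' ∪ ⋃ t ∈ T, F t)
    (hq : q ∈ B ∪ B' ∪ ⋃ t ∈ T, F t) (hpq : p ≠ q) (hpB' : p ∉ B') (hqB : q ∉ B) :
    ∃ D U, D ⊆ lane T F p ∪ lane T F q ∧ U ⊆ lane T F p ∪ lane T F q ∧ Disjoint D U ∧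
      (Reaches G D B B' p ∧ Reaches G U B' B q ∨ Reaches G D B B' q ∧ Reaches G U B' B p) := by
  by_cases hsame : ∃ t ∈ T, p ∈ F t ∧ q ∈ F t
  · obtain ⟨t, ht, hpt, hqt⟩ := hsame
    obtain ⟨D, U, hD, hU, hDU⟩ := (hF t ht).exists_reaches_of_ne hpt hqt hpq
    have hlane : F t ⊆ lane T F p ∪ lane T F q := fun z hz => .inl (.inr ⟨t, ht, hpt, hz⟩)
    exact ⟨D, U, hD.trans hlane, hU.trans hlane, hDU⟩
  · push Not at hsame
    obtain ⟨D, hD, hpD⟩ := exists_reaches_lane hF hp hpB'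
    rw [Set.union_comm B B'] at hq
    obtain ⟨U, hU, hqU⟩ := exists_reaches_lane (fun t ht => (hF t ht).symm) hq hqB
    exact ⟨D, U, hD.trans Set.subset_union_left, hU.trans Set.subset_union_right,
      (disjoint_lane_lane hdisj hpq hsame).mono hD hU, .inl ⟨hpD, hqU⟩⟩

/-- `G[W]` contains disjoint paths from `a` to `B`, from `B` to `B'`, and from `B'` to `b` that
meet `B ∪ B'` only in the required ends. -/
def Threaded (G : SimpleGraph V) (W B B' : Set V) (a b : V) : Prop :=
  ∃ L M R x y, L ⊆ W ∧ R ⊆ W ∧ Reaches G L B B' a ∧ IsStrand G W B B' M x y ∧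
    Reaches G R B' B b ∧ Disjoint L M ∧ Disjoint L R ∧ Disjoint M R

/-- `G[W]` contains disjoint paths from `a` to `p` and from `b` to `q` meeting `Q` only in `p`
and `q`. -/
def HasLegs (G : SimpleGraph V) (W Q : Set V) (a b p q : V) : Prop :=
  ∃ L M, IsStrand G W {a} Q L a p ∧ IsStrand G W {b} Q M b q ∧ Disjoint L M

theorem HasLegs.symm (h : HasLegs G W Q a b p q) : HasLegs G W Q b a q p := by
  obtain ⟨L, M, hL, hM, hLM⟩ := h
  exact ⟨M, L, hM, hL, hLM.symm⟩

theorem IsStrand.reaches_union (hL : IsStrand G W A Q L a p) (hB : B ⊆ Q) (hB' : B' ⊆ Q)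
    (hD : Reaches G D B B' p) : Reaches G (L ∪ D) B B' a := by
  obtain ⟨z, hpz, hDB, hDB'⟩ := hD
  have hLD : ∀ y ∈ L, y ∈ Q → y ∈ D := fun y hyL hyQ =>
    (hL.inter_right.le ⟨hyL, hyQ⟩ : y = p) ▸ hpz.left_mem
  refine ⟨z, (hL.isPathSet.linked.mono Set.subset_union_left).trans
    (hpz.mono Set.subset_union_right), ?_, Set.disjoint_left.2 ?_⟩
  · rw [← hDB]
    grind
  · rintro y (hy | hy) hyB'
    exacts [hDB'.le_bot ⟨hLD y hy (hB' hyB'), hyB'⟩, hDB'.le_bot ⟨hy, hyB'⟩]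

theorem IsStrand.disjoint_union (hL : IsStrand G W A Q L a p) (hp : p ∈ D) (hDU : Disjoint D U)
    (hU : U ⊆ Q) : Disjoint (L ∪ D) U := by
  refine Set.disjoint_union_left.2 ⟨Set.disjoint_left.2 fun z hzL hzU => ?_, hDU⟩
  exact hDU.le_bot ⟨(hL.inter_right.le ⟨hzL, hU hzU⟩ : z = p) ▸ hp, hzU⟩

theorem HasLegs.threaded (h : HasLegs G W Q a b p q) (hQW : Q ⊆ W) (hB : B ⊆ Q) (hB' : B' ⊆ Q)
    (hD : D ⊆ Q) (hU : U ⊆ Q) (hDU : Disjoint D U) (hM : IsStrand G W B B' M x y) (hMQ : M ⊆ Q)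
    (hMDU : Disjoint (D ∪ U) M) (hp : Reaches G D B B' p) (hq : Reaches G U B' B q) :
    Threaded G W B B' a b := by
  obtain ⟨L, R, hL, hR, hLR⟩ := h
  have hpD : p ∈ D := hp.mem
  have hqU : q ∈ U := hq.mem
  obtain ⟨hDM, hUM⟩ := Set.disjoint_union_left.1 hMDU
  refine ⟨L ∪ D, M, R ∪ U, x, y, Set.union_subset hL.subset (hD.trans hQW),
    Set.union_subset hR.subset (hU.trans hQW), hL.reaches_union hB hB' hp, hM,
    hR.reaches_union hB' hB hq, hL.disjoint_union hpD hDM hMQ, ?_,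
    (hR.disjoint_union hqU hUM hMQ).symm⟩
  have hRD : Disjoint (R ∪ U) D := hR.disjoint_union hqU hDU.symm hD
  exact Set.disjoint_union_right.2 ⟨Set.disjoint_union_left.2
    ⟨hLR, (Set.disjoint_union_left.1 hRD).1.symm⟩, hL.disjoint_union hpD hDU hU⟩

theorem HasLegs.threaded_or (h : HasLegs G W (B ∪ B' ∪ ⋃ t ∈ T, F t) a b p q)
    (hB : B ⊆ W) (hB' : B' ⊆ W) (hT : T.ncard = 3) (hdisj : T.PairwiseDisjoint F)
    (hF : ∀ t ∈ T, IsStrand G W B B' (F t) (f t) (g t)) (hpB' : p ∉ B') (hqB : q ∉ B) :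
    Threaded G W B B' a b ∨ Threaded G W B B' b a := by
  set Q := B ∪ B' ∪ ⋃ t ∈ T, F t with hQ
  obtain ⟨L, R, hL, hR, hLR⟩ := h
  have hFQ : ∀ t ∈ T, F t ⊆ Q := fun t ht => (Set.subset_biUnion_of_mem ht).trans (by simp [hQ])
  have hlane : ∀ z ∈ Q, lane T F z ⊆ Q := by
    rintro z hz y (rfl | ⟨t, ht, -, hyt⟩)
    exacts [hz, hFQ t ht hyt]
  have hQW : Q ⊆ W :=
    Set.union_subset (Set.union_subset hB hB') (Set.iUnion₂_subset fun t ht => (hF t ht).subset)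
  have hpq : p ≠ q := hLR.ne_of_mem hL.right_mem.1 hR.right_mem.1
  obtain ⟨D, U, hD, hU, hDU, hpqDU⟩ :=
    exists_reaches_reaches hdisj hF hL.right_mem.2 hR.right_mem.2 hpq hpB' hqB
  obtain ⟨t, ht, hpqt⟩ := exists_disjoint_lane hdisj hT p q
  have hMDU : Disjoint (D ∪ U) (F t) := hpqt.mono_left (Set.union_subset hD hU)
  have hlanes := Set.union_subset (hlane p hL.right_mem.2) (hlane q hR.right_mem.2)
  have hlegs : HasLegs G W Q a b p q := ⟨L, R, hL, hR, hLR⟩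
  rcases hpqDU with ⟨hp, hq⟩ | ⟨hq, hp⟩
  · exact .inl (hlegs.threaded hQW (by grind) (by grind) (hD.trans hlanes) (hU.trans hlanes) hDU
      (hF t ht) (hFQ t ht) hMDU hp hq)
  · exact .inr (hlegs.symm.threaded hQW (by grind) (by grind) (hD.trans hlanes) (hU.trans hlanes)
      hDU (hF t ht) (hFQ t ht) hMDU hq hp)

theorem HasLegs.reroute_left (hL : IsStrand G W {a} Q L a p) (hM : IsStrand G W {b} Q M b q)
    (hLM : Disjoint L M) (hR : IsPathSet G R l r) (hRW : R ⊆ W) (hRLM : R ∩ (L ∪ M) = {l})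
    (hRQ : R ∩ Q = {r}) (hl : l ∈ L) (hlp : l ≠ p) : HasLegs G W Q a b r q := by
  obtain ⟨S, T, hS, hT, rfl, hST⟩ := hL.isPathSet.split hl
  have hpS : p ∉ S := fun hp => hlp (hST.le ⟨hp, hT.linked.right_mem⟩).symm
  have hSR : S ∩ R ⊆ {l} := fun z hz => hRLM.le ⟨hz.2, .inl (.inl hz.1)⟩
  have hSQ : ∀ z ∈ S, z ∉ Q := fun z hzS hzQ =>
    hpS ((hL.inter_right.le ⟨.inl hzS, hzQ⟩ : z = p) ▸ hzS)
  refine ⟨S ∪ R, M, ⟨?_, hS.append hR hSR, ?_, ?_⟩, hM, Set.disjoint_left.2 ?_⟩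
  · exact Set.union_subset (Set.subset_union_left.trans hL.subset) hRW
  · simpa using .inl hS.linked.left_mem
  · rw [← hRQ]
    grind
  · rintro z (hz | hz) hzM
    · exact hLM.le_bot ⟨.inl hz, hzM⟩
    · exact hLM.le_bot ⟨(hRLM.le ⟨hz, .inr hzM⟩ : z = l) ▸ hl, hzM⟩

theorem HasLegs.exists_notMem (h : HasLegs G W Q a b p q) (hp : p ∈ B) (hq : q ∈ B)
    (hlink : ∃ c ∈ ({a, b} : Set V), ∃ y ∈ Q, Linked G (W \ B) c y) :
    ∃ p' q', HasLegs G W Q a b p' q' ∧ (p' ∉ B ∧ q' ∈ B ∨ p' ∈ B ∧ q' ∉ B) := by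
  obtain ⟨L, M, hL, hM, hLM⟩ := h
  obtain ⟨c, hc, y, hy, hcy⟩ := hlink
  have hcLM : c ∈ L ∪ M := by
    rcases hc with rfl | rfl
    exacts [.inl hL.left_mem.1, .inr hM.left_mem.1]
  obtain ⟨R, hRW, l, hl, r, -, hR, hRLM, hRQ⟩ := hcy.exists_isPathSet hcLM hy
  have hlB : l ∉ B := (hRW hR.linked.left_mem).2
  have hrB : r ∉ B := (hRW hR.linked.right_mem).2
  have hRW : R ⊆ W := hRW.trans Set.sdiff_subset
  rcases hl with hl | hl
  · exact ⟨r, q, .reroute_left hL hM hLM hR hRW hRLM hRQ hl (ne_of_mem_of_not_mem hp hlB).symm,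
      .inl ⟨hrB, hq⟩⟩
  · rw [Set.union_comm] at hRLM
    exact ⟨p, r, .symm (.reroute_left hM hL hLM.symm hR hRW hRLM hRQ hl
      (ne_of_mem_of_not_mem hq hlB).symm), .inr ⟨hp, hrB⟩⟩

theorem HasLegs.exists_balanced (h : HasLegs G W Q a b p q) (hBB' : Disjoint B B') (hB : B ⊆ Q)
    (hB' : B' ⊆ Q) (hlinkB : ∃ c ∈ ({a, b} : Set V), ∃ y ∈ B, Linked G (W \ B') c y)
    (hlinkB' : ∃ c ∈ ({a, b} : Set V), ∃ y ∈ B', Linked G (W \ B) c y) :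
    ∃ p q, HasLegs G W Q a b p q ∧ (p ∉ B' ∧ q ∉ B ∨ p ∉ B ∧ q ∉ B') := by
  have hdisj := Set.disjoint_left.1 hBB'
  by_cases hpqB : p ∈ B ∧ q ∈ B
  · obtain ⟨c, hc, y, hy, hcy⟩ := hlinkB'
    obtain ⟨p, q, h, hpq⟩ := h.exists_notMem hpqB.1 hpqB.2 ⟨c, hc, y, hB' hy, hcy⟩
    exact ⟨p, q, h, by grind⟩
  by_cases hpqB' : p ∈ B' ∧ q ∈ B'
  · obtain ⟨c, hc, y, hy, hcy⟩ := hlinkB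
    obtain ⟨p, q, h, hpq⟩ := h.exists_notMem hpqB'.1 hpqB'.2 ⟨c, hc, y, hB hy, hcy⟩
    exact ⟨p, q, h, by grind⟩
  · exact ⟨p, q, h, by grind⟩

theorem Anchored.robustlyLinked (h : Anchored G W a b) (hfin : W.Finite) (hQW : Q ⊆ W)
    (hQ : 2 ≤ Q.ncard) : RobustlyLinked G W Q {a, b} 2 := by
  intro S hSW hS2
  have hS : S.Finite := hfin.subset hSW
  obtain ⟨z, hz, hzS⟩ := Set.exists_mem_notMem_of_ncard_lt_ncard (hS2.trans_le hQ) hS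
  exact ⟨z, hz, (h.linked_of_ncard_lt_two hS hS2 (hQW hz) hzS).elim (⟨a, by simp, ·⟩)
    (⟨b, by simp, ·⟩)⟩

theorem Anchored.exists_hasLegs (h : Anchored G W a b) (hfin : W.Finite) (hab : a ≠ b)
    (hQW : Q ⊆ W) (hQ : 2 ≤ Q.ncard) : ∃ p q, HasLegs G W Q a b p q := by
  obtain ⟨P, x, hdisj, hP⟩ := ((h.robustlyLinked hfin hQW hQ).disjointlyLinked hfin)
    |>.exists_isStrand_to (Set.toFinite _) (Set.ncard_pair hab)
  have hleg : ∀ c ∈ ({a, b} : Set V), IsStrand G W {c} Q (P c) c (x c) := fun c hc =>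
    ⟨(hP c hc).subset, (hP c hc).isPathSet.symm, by simpa using (hP c hc).right_mem.1,
      (hP c hc).inter_left⟩
  exact ⟨x a, x b, P a, P b, hleg a (by simp), hleg b (by simp), hdisj (by simp) (by simp) hab⟩

theorem Anchored.threaded_or (h : Anchored G W a b) (hfin : W.Finite) (hab : a ≠ b) (hB : B ⊆ W)
    (hB' : B' ⊆ W) (hBB' : Disjoint B B') (hB2 : 2 ≤ B.ncard) (hrob : RobustlyLinked G W B B' 3)
    (hlinkB : ∃ c ∈ ({a, b} : Set V), ∃ y ∈ B, Linked G (W \ B') c y)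
    (hlinkB' : ∃ c ∈ ({a, b} : Set V), ∃ y ∈ B', Linked G (W \ B) c y) :
    Threaded G W B B' a b ∨ Threaded G W B B' b a := by
  obtain ⟨T, F, f, g, hT, hdisj, hF⟩ := (hrob.disjointlyLinked hfin).exists_isStrand
  have hQW : B ∪ B' ∪ ⋃ t ∈ T, F t ⊆ W :=
    Set.union_subset (Set.union_subset hB hB') (Set.iUnion₂_subset fun t ht => (hF t ht).subset)
  obtain ⟨p, q, hlegs⟩ := h.exists_hasLegs hfin hab hQW
    (hB2.trans (Set.ncard_le_ncard (by grind) (hfin.subset hQW)))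
  obtain ⟨p, q, hlegs, hpq | hpq⟩ :=
    hlegs.exists_balanced hBB' (by grind) (by grind) hlinkB hlinkB'
  · exact hlegs.threaded_or hB hB' hT hdisj hF hpq.1 hpq.2
  · exact (hlegs.symm.threaded_or hB hB' hT hdisj hF hpq.2 hpq.1).symm

/-! ### The doubling step -/

/-- For any two vertices of any induced subgraph of `G` there is a partition of its vertices that
separates the two and takes at most `k` neighbours away from every vertex. -/
def SplittingProperty (G : SimpleGraph V) (k : ℕ) : Prop :=
  ∀ S : Set V, ∀ x ∈ S, ∀ y ∈ S, x ≠ y → ∃ X Y, X ∪ Y = S ∧ Disjoint X Y ∧ x ∈ X ∧ y ∈ Y ∧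
    (∀ v ∈ X, (G.neighborSet v ∩ S).ncard ≤ (G.neighborSet v ∩ X).ncard + k) ∧
    (∀ v ∈ Y, (G.neighborSet v ∩ S).ncard ≤ (G.neighborSet v ∩ Y).ncard + k)

theorem Linked.of_sup_edge (h : Linked (G ⊔ edge a b) A u v) (hab : a ∉ A ∨ b ∉ A) :
    Linked G A u v := by
  obtain ⟨p, hp⟩ := h
  induction p with
  | nil => exact .refl (hp _ (by simp))
  | @cons u w v huw p ih =>
    have hu : u ∈ A := hp u (by simp)
    have hw : w ∈ A := hp w (by simp)
    have huw : G.Adj u w := by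
      rcases huw with huw | huw
      · exact huw
      · rw [edge_adj] at huw
        grind
    exact (linked_of_adj huw hu hw).trans (ih fun x hx => hp x (by simp [hx]))

theorem Reaches.of_sup_edge (h : Reaches (G ⊔ edge a b) A B B' u) (hab : a ∉ A ∨ b ∉ A) :
    Reaches G A B B' u :=
  h.imp fun _ hz => ⟨hz.1.of_sup_edge hab, hz.2⟩

theorem LongPath.of_reaches (hBB' : Disjoint B B') (hB : Traversable G B n)
    (hB' : Traversable G B' n) (hL : Reaches G L B B' a) (hR : Reaches G R B' B b)
    (hM : Linked G M x y) (hMB : M ∩ B = {x}) (hMB' : M ∩ B' = {y}) (hLM : Disjoint L M)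
    (hLR : Disjoint L R) (hMR : Disjoint M R) :
    LongPath G (L ∪ B ∪ M ∪ B' ∪ R) (2 * n) a b := by
  obtain ⟨p, hap, hLB, hLB'⟩ := hL
  obtain ⟨q, hbq, hRB', hRB⟩ := hR
  have hpB : p ∈ L ∩ B := hLB.ge rfl
  have hxB : x ∈ M ∩ B := hMB.ge rfl
  have hyB' : y ∈ M ∩ B' := hMB'.ge rfl
  have hqB' : q ∈ R ∩ B' := hRB'.ge rfl
  have hpx := hB p hpB.2 x hxB.2 (hLM.ne_of_mem hpB.1 hxB.1)
  have hyq := hB' y hyB'.2 q hqB'.2 (hMR.ne_of_mem hyB'.1 hqB'.1)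
  have hLBM : (L ∪ B) ∩ M ⊆ {x} := by
    rintro z ⟨hzL | hzB, hzM⟩
    exacts [(hLM.le_bot ⟨hzL, hzM⟩).elim, hMB.le ⟨hzM, hzB⟩]
  have hLBMB' : (L ∪ B ∪ M) ∩ B' ⊆ {y} := by
    rintro z ⟨(hzL | hzB) | hzM, hzB'⟩
    exacts [(hLB'.le_bot ⟨hzL, hzB'⟩).elim, (hBB'.le_bot ⟨hzB, hzB'⟩).elim, hMB'.le ⟨hzM, hzB'⟩]
  have hLBMB'R : (L ∪ B ∪ M ∪ B') ∩ R ⊆ {q} := by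
    rintro z ⟨((hzL | hzB) | hzM) | hzB', hzR⟩
    exacts [(hLR.le_bot ⟨hzL, hzR⟩).elim, (hRB.le_bot ⟨hzR, hzB⟩).elim,
      (hMR.le_bot ⟨hzM, hzR⟩).elim, hRB'.le ⟨hzR, hzB'⟩]
  exact ((((hap.longPath.append hpx hLB.le).append hM.longPath hLBM).append hyq hLBMB').append
    hbq.symm.longPath hLBMB'R).mono subset_rfl (by omega)

theorem Threaded.longPath (h : Threaded (G ⊔ edge a b) W B B' a b) (hBW : B ⊆ W) (hB'W : B' ⊆ W)
    (hBB' : Disjoint B B') (hB : Traversable G B n) (hB' : Traversable G B' n) :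
    LongPath G W (2 * n) a b := by
  obtain ⟨L, M, R, x, y, hLW, hRW, hL, hM, hR, hLM, hLR, hMR⟩ := h
  have haM : a ∉ M := fun haM => hLM.le_bot ⟨hL.mem, haM⟩
  have haR : a ∉ R := fun haR => hLR.le_bot ⟨hL.mem, haR⟩
  have hbL : b ∉ L := fun hbL => hLR.le_bot ⟨hbL, hR.mem⟩
  have hMW : M ⊆ W := hM.subset
  exact (LongPath.of_reaches hBB' hB hB' (hL.of_sup_edge (.inr hbL)) (hR.of_sup_edge (.inl haR))
    (hM.isPathSet.linked.of_sup_edge (.inl haM)) hM.inter_left hM.inter_right hLM hLR hMR).mono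
    (by grind) le_rfl

theorem AttachedAt.exists_pair (h : AttachedAt G W K S) (hSK : S ⊆ W \ K) (hBK : B ⊆ W \ K)
    (hfin : W.Finite) (hS : S.ncard ≤ 2) (hB : 2 < B.ncard) :
    ∃ s ∈ W \ K, ∃ t ∈ W \ K, s ≠ t ∧ AttachedAt G W K {s, t} ∧ K ∪ {s, t} ≠ W := by
  have hSB : (S ∪ B).Finite := hfin.subset ((Set.union_subset hSK hBK).trans Set.sdiff_subset)
  obtain ⟨S', hSS', hS'B, hS'⟩ := Set.exists_subsuperset_card_eq Set.subset_union_left hS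
    (hB.le.trans (Set.ncard_le_ncard Set.subset_union_right hSB))
  obtain ⟨s, t, hst, rfl⟩ := Set.ncard_eq_two.1 hS'
  have hS'K : {s, t} ⊆ W \ K := hS'B.trans (Set.union_subset hSK hBK)
  obtain ⟨z, hzB, hzst⟩ := Set.exists_mem_notMem_of_ncard_lt_ncard (hS'.trans_lt hB)
  refine ⟨s, hS'K (by simp), t, hS'K (by simp), hst,
    fun u hu v hv huv => (h u hu v hv huv).imp id (hSS' ·), fun hW => ?_⟩
  exact (hW.ge (hBK hzB).1).elim (hBK hzB).2 hzst

theorem AttachedAt.of_le {H : SimpleGraph V} (h : AttachedAt H W K S) (hGH : G ≤ H) :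
    AttachedAt G W K S :=
  fun u hu v hv huv => h u hu v hv (hGH huv)

theorem exists_attachedAt_separating (hB : B ⊆ W) (h : ¬ RobustlyLinked G W B B' n) :
    ∃ S ⊆ W, S.ncard < n ∧ ∃ K ⊆ W \ S, B \ S ⊆ K ∧ Disjoint B' K ∧ AttachedAt G W K S := by
  unfold RobustlyLinked at h
  push Not at h
  obtain ⟨S, hSW, hSn, hBB'⟩ := h
  refine ⟨S, hSW, hSn, {z | ∃ x ∈ B, Linked G (W \ S) x z}, fun z ⟨x, _, hxz⟩ => hxz.right_mem,
    fun x hx => ⟨x, hx.1, .refl ⟨hB hx.1, hx.2⟩⟩,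
    Set.disjoint_left.2 fun y hy ⟨x, hx, hxy⟩ => hBB' x hx y hy hxy, ?_⟩
  rintro u ⟨x, hx, hxu⟩ v hv huv
  by_cases hvS : v ∈ S
  exacts [.inr hvS, .inl ⟨x, hx, hxu.trans_adj huv ⟨hv, hvS⟩⟩]

theorem exists_attachedAt_of_not_robustlyLinked (hfin : W.Finite) (ha : a ∈ W) (hb : b ∈ W)
    (hab : a ≠ b) (hB : B ⊆ W) (hB' : B' ⊆ W) (hB3 : 2 < B.ncard) (hB'3 : 2 < B'.ncard)
    (h : ¬ RobustlyLinked (G ⊔ edge a b) W B B' 3) :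
    ∃ K ⊆ W \ {a, b}, K.Nonempty ∧ ∃ s ∈ W \ K, ∃ t ∈ W \ K, s ≠ t ∧
      AttachedAt G W K {s, t} ∧ K ∪ {s, t} ≠ W := by
  obtain ⟨S, hSW, hS3, K, hKW, hBK, hB'K, hK⟩ := exists_attachedAt_separating hB h
  have hSfin : S.Finite := hfin.subset hSW
  have hadj : (G ⊔ edge a b).Adj a b := .inr (by simp [edge_adj, hab])
  have hKG : AttachedAt G W K S := hK.of_le le_sup_left
  by_cases habK : a ∉ K ∧ b ∉ K
  · obtain ⟨x, hx, hxS⟩ := Set.exists_mem_notMem_of_ncard_lt_ncard (hS3.trans_le hB3) hSfin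
    exact ⟨K, by grind, ⟨x, hBK ⟨hx, hxS⟩⟩, hKG.exists_pair (by grind)
      (fun y hy => ⟨hB' hy, hB'K.notMem_of_mem_left hy⟩) hfin (by omega) hB'3⟩
  · obtain ⟨y, hy, hyS⟩ := Set.exists_mem_notMem_of_ncard_lt_ncard (hS3.trans_le hB'3) hSfin
    have haKS : a ∈ K ∪ S := by
      by_cases haK : a ∈ K
      exacts [.inl haK, hK b (by tauto) a ha hadj.symm]
    have hbKS : b ∈ K ∪ S := by
      by_cases hbK : b ∈ K
      exacts [.inl hbK, hK a (by tauto) b hb hadj]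
    exact ⟨W \ (K ∪ S), by grind, ⟨y, hB' hy, fun h => h.elim (hB'K.notMem_of_mem_left hy) hyS⟩,
      hKG.compl.exists_pair (by grind) (by grind) hfin (by omega) hB3⟩

theorem Host.symm (h : Host G d W a b) : Host G d W b a :=
  ⟨h.finite, h.right_mem, h.left_mem, h.ne.symm, h.third.imp fun _ hv => ⟨hv.1, hv.2.2, hv.2.1⟩,
    h.anchored.symm, fun v hv hvb hva => h.degree v hv hva hvb⟩

theorem Host.exists_adj_left (h : Host G d W a b) : ∃ x ∈ W, x ≠ b ∧ G.Adj a x := by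
  obtain ⟨v, hv, hva, hvb⟩ := h.third
  have hlink : Linked G (W \ {b}) v a :=
    (h.anchored b v hv hvb).resolve_right fun hvb => hvb.right_mem.2 rfl
  obtain ⟨x, hx, y, hy, hxy⟩ := hlink.symm.exists_adj_of_mem_of_notMem (Set.mem_singleton a) hva
  obtain rfl : x = a := hx.2
  exact ⟨y, hy.1.1, hy.1.2, hxy⟩

theorem Host.exists_adj_adj (h : Host G d W a b) (hd : 3 ≤ d) :
    ∃ x ∈ W, ∃ y ∈ W, x ≠ b ∧ y ≠ a ∧ x ≠ y ∧ G.Adj a x ∧ G.Adj b y := by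
  obtain ⟨x, hx, hxb, hax⟩ := h.exists_adj_left
  obtain ⟨y, hy, hya, hby⟩ := h.symm.exists_adj_left
  by_cases hxy : x = y
  swap
  · exact ⟨x, hx, y, hy, hxb, hya, hxy, hax, hby⟩
  subst hxy
  obtain ⟨v, ⟨hxv, hvW⟩, hvab⟩ := Set.exists_mem_notMem_of_ncard_lt_ncard
    (s := {a, b}) (t := G.neighborSet x ∩ W) <| by
      rw [Set.ncard_pair h.ne]
      exact (h.degree x hx hya hxb).trans_lt' hd
  obtain ⟨c, hc, hvc⟩ : ∃ c ∈ ({a, b} : Set V), Linked G (W \ {x}) v c :=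
    (h.anchored x v hvW hxv.ne').elim (⟨a, by simp, ·⟩) (⟨b, by simp, ·⟩)
  obtain ⟨c, ⟨-, hc⟩, z, ⟨⟨hzW, hzx⟩, hzab⟩, hcz⟩ :=
    hvc.symm.exists_adj_of_mem_of_notMem hc hvab
  simp only [Set.mem_insert_iff, Set.mem_singleton_iff, not_or] at hzab
  rcases hc with rfl | rfl
  · exact ⟨z, hzW, x, hx, hzab.2, hya, hzx, hcz, hby⟩
  · exact ⟨x, hx, z, hzW, hxb, hzab.1, Ne.symm hzx, hax, hcz⟩

theorem DegreeForcesPath.exists_traversable (hforce : DegreeForcesPath G d n) (hd : 1 ≤ d)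
    (hdn : d ≤ 1 → n ≤ 2) (hW : Host G (d + k + 2) W a b) (hXW : X ⊆ W)
    (hX : ∀ v ∈ X, (G.neighborSet v ∩ W).ncard ≤ (G.neighborSet v ∩ X).ncard + k) (hx : x ∈ X)
    (hxb : x ≠ b) (hax : G.Adj a x) : ∃ B ⊆ X \ {b}, 2 < B.ncard ∧ Traversable G B n ∧
      ∃ y ∈ B, Linked G (insert a X \ {b}) a y := by
  set C := component G (X \ {b}) x
  have hxC : x ∈ C := .refl ⟨hx, hxb⟩
  have hCX : C ⊆ X \ {b} := component_subset
  have hCfin : C.Finite := hW.finite.subset ((hCX.trans Set.sdiff_subset).trans hXW)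
  have hdeg : ∀ v ∈ C, v ≠ a → d + 1 ≤ (G.neighborSet v ∩ C).ncard := by
    intro v hv hva
    have hNC : G.neighborSet v ∩ (X \ {b}) ⊆ G.neighborSet v ∩ C := fun z hz =>
      ⟨hz.1, Linked.trans_adj hv hz.1 hz.2⟩
    have hNW := hW.degree v (hXW (hCX hv).1) hva (hCX hv).2
    have hNX := hX v (hCX hv).1
    have hNb := Set.pred_ncard_le_ncard_sdiff_singleton (G.neighborSet v ∩ X) b
    rw [Set.inter_sdiff_assoc] at hNb
    have := Set.ncard_le_ncard hNC (hCfin.inter_of_right _)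
    omega
  obtain ⟨c, B, hB⟩ := exists_isLeafBlock hCfin connectedOn_component hxC hax.ne'
    fun v hv hva => (Nat.succ_le_succ hd).trans (hdeg v hv hva)
  obtain ⟨y, hy⟩ : B.Nonempty := Set.nonempty_of_ncard_ne_zero (by have := hB.two_lt_ncard; omega)
  have hxy : Linked G (insert a X \ {b}) x y :=
    (connectedOn_component x hxC y (hB.subset hy)).mono
      (hCX.trans (Set.sdiff_subset_sdiff_left (Set.subset_insert a X)))
  exact ⟨B, hB.subset.trans hCX, hB.two_lt_ncard, hB.traversable hforce hdn hCfin hdeg, y, hy,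
    (linked_of_adj hax (show a ∈ insert a X \ {b} from ⟨.inl rfl, hW.ne⟩) hxy.left_mem).trans hxy⟩

theorem Anchored.of_le {H : SimpleGraph V} (h : Anchored G W a b) (hGH : G ≤ H) :
    Anchored H W a b :=
  fun w v hv hvw => (h w v hv hvw).imp (.of_le · hGH) (.of_le · hGH)

theorem Host.longPath_of_robustlyLinked (h : Host G d W a b) (hB : B ⊆ W)
    (hB' : B' ⊆ W) (hBB' : Disjoint B B') (hB3 : 2 < B.ncard)
    (hBn : Traversable G B n) (hB'n : Traversable G B' n)
    (hrob : RobustlyLinked (G ⊔ edge a b) W B B' 3)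
    (hlinkB : ∃ y ∈ B, Linked G (W \ B') a y) (hlinkB' : ∃ y ∈ B', Linked G (W \ B) b y) :
    LongPath G W (2 * n) a b := by
  have hle : G ≤ G ⊔ edge a b := le_sup_left
  obtain ⟨y, hy, hay⟩ := hlinkB
  obtain ⟨y', hy', hby'⟩ := hlinkB'
  rcases (h.anchored.of_le hle).threaded_or h.finite h.ne hB hB' hBB' hB3.le hrob
      ⟨a, by simp, y, hy, hay.of_le hle⟩ ⟨b, by simp, y', hy', hby'.of_le hle⟩ with hab | hba
  · exact hab.longPath hB hB' hBB' hBn hB'n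
  · rw [edge_comm] at hba
    exact (hba.longPath hB hB' hBB' hBn hB'n).symm

theorem DegreeForcesPath.step (hforce : DegreeForcesPath G d n) (hsplit : SplittingProperty G k)
    (hd : 1 ≤ d) (hdn : d ≤ 1 → n ≤ 2) : DegreeForcesPath G (d + k + 2) (2 * n) := by
  intro W a b hW
  induction hN : W.ncard using Nat.strong_induction_on generalizing W a b with
  | _ N ih =>
  subst hN
  obtain ⟨x, hx, y, hy, hxb, hya, hxy, hax, hby⟩ := hW.exists_adj_adj (by omega)
  obtain ⟨X, Y, rfl, hXY, hxX, hyY, hX, hY⟩ := hsplit W x hx y hy hxy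
  obtain ⟨B, hBX, hB3, hB, z, hz, haz⟩ :=
    hforce.exists_traversable hd hdn hW Set.subset_union_left hX hxX hxb hax
  obtain ⟨B', hB'Y, hB'3, hB', z', hz', hbz'⟩ :=
    hforce.exists_traversable hd hdn hW.symm Set.subset_union_right hY hyY hya hby
  have hXY := Set.disjoint_left.1 hXY
  have hBW : B ⊆ X ∪ Y := by grind
  have hB'W : B' ⊆ X ∪ Y := by grind
  by_cases hrob : RobustlyLinked (G ⊔ edge a b) (X ∪ Y) B B' 3
  · have haX : insert a X \ {b} ⊆ (X ∪ Y) \ B' := by grind [hW.left_mem]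
    have hbY : insert b Y \ {a} ⊆ (X ∪ Y) \ B := by grind [hW.right_mem]
    exact hW.longPath_of_robustlyLinked hBW hB'W (Set.disjoint_left.2 (by grind)) hB3 hB hB' hrob
      ⟨z, hz, haz.mono haX⟩ ⟨z', hz', hbz'.mono hbY⟩
  · obtain ⟨K, hKW, hK, s, hs, t, ht, hst, hatt, hne⟩ :=
      exists_attachedAt_of_not_robustlyLinked hW.finite hW.left_mem hW.right_mem hW.ne hBW hB'W
        hB3 hB'3 hrob
    have hKfin : K.Finite := hW.finite.subset (hKW.trans Set.sdiff_subset)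
    have hhost := hatt.host hW.anchored hKfin hKW hK hs ht hst
      fun v hv => hW.degree v (hKW hv).1 (by grind) (by grind)
    have hsub : K ∪ {s, t} ⊆ X ∪ Y := by grind
    exact hatt.longPath hW.anchored hW.finite hKW hK hs ht hst
      (ih _ (Set.ncard_lt_ncard (hsub.ssubset_of_ne hne) hW.finite) hhost rfl)

/-- The path length promised by minimum degree `d` under the splitting property with loss `k`. -/
noncomputable def pathBound (k d : ℕ) : ℕ :=
  ⌈(2 : ℝ) ^ ((d : ℝ) / (k + 2))⌉₊

theorem pathBound_le_two (hd : d ≤ k + 2) : pathBound k d ≤ 2 := by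
  refine Nat.ceil_le.2 ?_
  calc (2 : ℝ) ^ ((d : ℝ) / (k + 2)) ≤ (2 : ℝ) ^ (1 : ℝ) :=
        Real.rpow_le_rpow_of_exponent_le one_le_two
          ((div_le_one (by positivity)).2 (by exact_mod_cast hd))
    _ = ((2 : ℕ) : ℝ) := by norm_num

theorem pathBound_add_le (k d : ℕ) : pathBound k (d + k + 2) ≤ 2 * pathBound k d := by
  have hexp : ((d + k + 2 : ℕ) : ℝ) / (k + 2) = (d : ℝ) / (k + 2) + 1 := by
    push_cast
    field_simp
    ring
  refine Nat.ceil_le.2 ?_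
  calc (2 : ℝ) ^ (((d + k + 2 : ℕ) : ℝ) / (k + 2)) = 2 * (2 : ℝ) ^ ((d : ℝ) / (k + 2)) := by
        rw [hexp, Real.rpow_add_one two_ne_zero, mul_comm]
    _ ≤ 2 * (pathBound k d : ℝ) := by gcongr; exact Nat.le_ceil _
    _ = ((2 * pathBound k d : ℕ) : ℝ) := by push_cast; rfl

theorem SplittingProperty.degreeForcesPath (hsplit : SplittingProperty G k) (d : ℕ) :
    DegreeForcesPath G d (pathBound k d) := by
  induction d using Nat.strong_induction_on with
  | _ d ih =>
    by_cases hd : d ≤ k + 2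
    · exact fun W a b hW => hW.longPath_two.mono subset_rfl (pathBound_le_two hd)
    · obtain ⟨D, rfl⟩ : ∃ D, d = D + k + 2 := ⟨d - (k + 2), by omega⟩
      have hstep := (ih D (by omega)).step hsplit (by omega) fun hD => pathBound_le_two (by omega)
      exact fun W a b hW => (hstep hW).mono subset_rfl (pathBound_add_le k D)

/-! ### Infinite graphs -/

/-- The vertices at distance at most `n` from `v` in `G[A]`; empty if `v ∉ A`. -/
def ballIn (G : SimpleGraph V) (A : Set V) (n : ℕ) (v : V) : Set V :=
  {w | ∃ p : G.Walk v w, (∀ x ∈ p.support, x ∈ A) ∧ p.length ≤ n}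

theorem ballIn_trans (hw : w ∈ ballIn G A m v) (hz : z ∈ ballIn G A n w) :
    z ∈ ballIn G A (m + n) v := by
  obtain ⟨p, hpA, hp⟩ := hw
  obtain ⟨q, hqA, hq⟩ := hz
  refine ⟨p.append q, fun x hx => ?_, by rw [Walk.length_append]; omega⟩
  exact (Walk.mem_support_append_iff p q |>.1 hx).elim (hpA x) (hqA x)

theorem finite_ballIn (hA : ∀ v ∈ A, (G.neighborSet v ∩ A).Finite) (n : ℕ) (v : V) :
    (ballIn G A n v).Finite := by
  induction n generalizing v with
  | zero =>
    refine (Set.finite_singleton v).subset ?_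
    rintro w ⟨p, -, hp⟩
    exact (Walk.eq_of_length_eq_zero (Nat.le_zero.1 hp)).symm
  | succ n ih =>
    by_cases hv : v ∈ A
    · refine ((Set.finite_singleton v).union ((hA v hv).biUnion fun w _ => ih w)).subset ?_
      rintro w ⟨p, hpA, hp⟩
      cases p with
      | nil => exact .inl rfl
      | @cons _ u _ hvu p =>
        refine .inr (Set.mem_biUnion (x := u) ⟨hvu, hpA u (by simp)⟩ ⟨p, fun x hx => ?_, ?_⟩)
        · exact hpA x (by simp [hx])
        · simpa using hp
    · convert Set.finite_empty
      exact Set.eq_empty_of_forall_notMem fun w ⟨p, hpA, _⟩ => hv (hpA v p.start_mem_support)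

theorem linked_of_mem_ballIn (hw : w ∈ ballIn G A n v) : Linked G A v w :=
  hw.imp fun _ hp => hp.1

theorem mem_ballIn_of_not_longPath (ha : a ∈ W) (hb : b ∈ W) (hab : a ≠ b) (hax : G.Adj a x)
    (hby : G.Adj b y) (hyx : Linked G (W \ {a, b}) y x) (hn : ¬ LongPath G W n a b) :
    x ∈ ballIn G (W \ {a, b}) n y := by
  obtain ⟨p, hp, hpW, -⟩ := hyx.longPath
  refine ⟨p, hpW, ?_⟩
  have hy := hyx.left_mem
  have hx := hyx.right_mem
  have hby' : LongPath G {b, y} 1 b y := (isPathSet_of_adj hby).longPath_one hby.ne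
  have hxa : LongPath G {x, a} 1 x a := (isPathSet_of_adj hax.symm).longPath_one hax.ne'
  have hba := (hby'.append ⟨p, hp, hpW, le_rfl⟩ (by grind)).append hxa (by grind)
  by_contra! hlt
  exact hn (hba.symm.mono (by grind) (by omega))

theorem exists_mem_ballIn_of_not_longPath (hW : Anchored G W a b) (ha : a ∈ W) (hb : b ∈ W)
    (hv : v ∈ W \ {a, b}) (hn : ¬ LongPath G W n a b) :
    ∃ x, G.Adj a x ∧ v ∈ ballIn G (W \ {a, b}) n x := by
  simp only [Set.mem_sdiff, Set.mem_insert_iff, Set.mem_singleton_iff, not_or] at hv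
  obtain ⟨hvW, hva, hvb⟩ := hv
  obtain ⟨P, hPW, ⟨p, hp, hpP⟩, hvP⟩ := hW.exists_isPathSet ha hb hvW hva hvb
  have hlen : p.length < n := by
    by_contra! hlen
    exact hn ⟨p, hp, fun x hx => hPW ((hpP x).1 hx), hlen⟩
  obtain ⟨q, r, rfl⟩ := Walk.mem_support_iff_exists_append.1 ((hpP v).2 hvP)
  cases q with
  | nil => exact absurd rfl hva
  | @cons _ x _ hax q =>
    rw [Walk.cons_append] at hp hlen hpP
    rw [Walk.cons_isPath_iff, Walk.mem_support_append_iff, not_or] at hp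
    refine ⟨x, hax, q, fun z hz => ⟨hPW ((hpP z).1 (by simp [hz])), ?_⟩, ?_⟩
    · rintro (rfl | rfl)
      exacts [hp.2.1 hz, hp.1.ne_of_mem_support_of_append (Ne.symm hvb) hz r.end_mem_support rfl]
    · simp only [Walk.length_cons, Walk.length_append] at hlen
      omega

theorem Anchored.finite_component (hW : Anchored G W a b) (ha : a ∈ W) (hb : b ∈ W) (hab : a ≠ b)
    (hn : ¬ LongPath G W n a b) (hfin : ∀ v ∈ W \ {a, b}, (G.neighborSet v ∩ W).Finite)
    (hv : v ∈ W \ {a, b}) : (component G (W \ {a, b}) v).Finite := by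
  obtain ⟨y, hby, hyv⟩ := exists_mem_ballIn_of_not_longPath hW.symm hb ha (Set.pair_comm a b ▸ hv)
    (mt LongPath.symm hn)
  rw [Set.pair_comm b a] at hyv
  refine (finite_ballIn (G := G) (A := W \ {a, b}) (fun u hu => ?_) (n + n) y).subset fun u hu => ?_
  · exact (hfin u hu).subset (Set.inter_subset_inter_right _ Set.sdiff_subset)
  · obtain ⟨x, hax, hxu⟩ := exists_mem_ballIn_of_not_longPath hW ha hb hu.right_mem hn
    have hyx : Linked G (W \ {a, b}) y x :=
      ((linked_of_mem_ballIn hyv).trans hu).trans (linked_of_mem_ballIn hxu).symm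
    exact ballIn_trans (mem_ballIn_of_not_longPath ha hb hab hax hby hyx hn) hxu

theorem linked_of_twoConnected (h : TwoConnected G) (hu : u ≠ w) (hv : v ≠ w) :
    Linked G (Set.univ \ {w}) u v := by
  obtain ⟨p⟩ := (h.2 w).preconnected ⟨u, trivial, hu⟩ ⟨v, trivial, hv⟩
  refine ⟨p.map (Subgraph.hom _), fun x hx => ?_⟩
  obtain ⟨y, -, rfl⟩ := List.mem_map.1 (Walk.support_map (Subgraph.hom _) p ▸ hx)
  exact y.2

theorem anchored_univ_of_twoConnected (h : TwoConnected G) (hab : a ≠ b) :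
    Anchored G Set.univ a b := by
  intro w v _ hvw
  by_cases haw : a = w
  · exact .inr (linked_of_twoConnected h hvw (haw ▸ hab.symm))
  · exact .inl (linked_of_twoConnected h hvw haw)

theorem exists_ne_ne_of_twoConnected (h : TwoConnected G) (a b : V) : ∃ v, v ≠ a ∧ v ≠ b := by
  obtain ⟨⟨x, y, z, hxy, hxz, hyz⟩, -⟩ := h
  obtain ⟨v, -, hv⟩ := Set.exists_mem_notMem_of_ncard_lt_ncard (s := {a, b}) (t := {x, y, z}) <| by
    rw [Set.ncard_eq_three.2 ⟨x, y, z, hxy, hxz, hyz, rfl⟩]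
    exact Nat.lt_succ_of_le ((Set.ncard_insert_le a {b}).trans_eq (by rw [Set.ncard_singleton]))
  exact ⟨v, by grind⟩

theorem neighborSet_induce (H : G.Subgraph) (hv : v ∈ S) :
    (H.induce S).neighborSet v = H.neighborSet v ∩ S := by
  ext z
  simp [hv, and_comm]

theorem splittingProperty_of_subgraph
    (h : ∀ (H : G.Subgraph) (x y : V), x ∈ H.verts → y ∈ H.verts → x ≠ y →
      ∃ X Y : Set V, X ∪ Y = H.verts ∧ Disjoint X Y ∧ x ∈ X ∧ y ∈ Y ∧
        (∀ v ∈ X, (H.neighborSet v).ncard - k ≤ ((H.induce X).neighborSet v).ncard) ∧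
        (∀ v ∈ Y, (H.neighborSet v).ncard - k ≤ ((H.induce Y).neighborSet v).ncard)) :
    SplittingProperty G k := by
  intro S x hx y hy hxy
  obtain ⟨X, Y, hXY, hdisj, hxX, hyY, hX, hY⟩ := h ((⊤ : G.Subgraph).induce S) x y hx hy hxy
  rw [Subgraph.induce_verts] at hXY
  have loss : ∀ Z ⊆ S, ∀ v ∈ Z, (((⊤ : G.Subgraph).induce S).neighborSet v).ncard - k ≤
      ((((⊤ : G.Subgraph).induce S).induce Z).neighborSet v).ncard →
      (G.neighborSet v ∩ S).ncard ≤ (G.neighborSet v ∩ Z).ncard + k := by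
    intro Z hZS v hv hvk
    rwa [neighborSet_induce _ hv, neighborSet_induce _ (hZS hv), Subgraph.neighborSet_top,
      Set.inter_assoc, Set.inter_eq_right.2 hZS, Nat.sub_le_iff_le_add] at hvk
  exact ⟨X, Y, hXY, hdisj, hxX, hyY,
    fun v hv => loss X (hXY ▸ Set.subset_union_left) v hv (hX v hv),
    fun v hv => loss Y (hXY ▸ Set.subset_union_right) v hv (hY v hv)⟩

end SplittingPath

open SplittingPath in
theorem splitting_property_long_path_general {V : Type*} {G : SimpleGraph V} {W : Set V} {a b : V}
    {k d : ℕ} (hsplit : SplittingProperty G k) (hW : Anchored G W a b) (ha : a ∈ W) (hb : b ∈ W)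
    (hab : a ≠ b) (hthird : ∃ v ∈ W, v ≠ a ∧ v ≠ b)
    (hdeg : ∀ v ∈ W, v ≠ a → v ≠ b → d ≤ (G.neighborSet v ∩ W).ncard) :
    ∃ p : G.Walk a b, p.IsPath ∧ (∀ x ∈ p.support, x ∈ W) ∧
      (2 : ℝ) ^ ((d : ℝ) / (k + 2)) ≤ (p.length : ℝ) := by
  suffices hlong : LongPath G W (pathBound k d) a b by
    obtain ⟨p, hp, hpW, hlen⟩ := hlong
    exact ⟨p, hp, hpW, Nat.ceil_le.1 hlen⟩
  obtain rfl | hd := Nat.eq_zero_or_pos d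
  · exact (hW.longPath_two ha hb hthird).mono subset_rfl (pathBound_le_two (Nat.zero_le _))
  by_contra hn
  obtain ⟨v, hv, hva, hvb⟩ := hthird
  set C := component G (W \ {a, b}) v
  have hCW : C ⊆ W \ {a, b} := component_subset
  have hdeg' : ∀ u ∈ W \ {a, b}, d ≤ (G.neighborSet u ∩ W).ncard := fun u hu =>
    hdeg u hu.1 (by grind) (by grind)
  have hCfin : C.Finite := hW.finite_component ha hb hab hn
    (fun u hu => Set.finite_of_ncard_pos (hd.trans_le (hdeg' u hu))) (by grind)
  have hhost : Host G d (C ∪ {a, b}) a b :=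
    attachedAt_component.host hW hCfin hCW ⟨v, .refl (by grind)⟩ (by grind) (by grind) hab
      fun u hu => hdeg' u (hCW hu)
  exact hn ((hsplit.degreeForcesPath d hhost).mono (by grind) le_rfl)

/-- Let `G` be a 2-connected graph with distinct vertices `a, b` such that every
vertex `v ∉ {a,b}` has degree at least `d`.  Suppose every subgraph `H` of `G` has
the splitting property: any two distinct vertices of `H` can be separated by a
partition of the vertices of `H` in which every vertex loses at most `k` neighbours.
Then `G` contains an `a-b` path of length at least `2^(d/(k+2))`. -/
theorem splitting_property_long_path {V : Type*} (G : SimpleGraph V) (k d : ℕ)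
    (h2 : TwoConnected G) (a b : V) (hab : a ≠ b)
    (hdeg : ∀ v : V, v ≠ a → v ≠ b → d ≤ (G.neighborSet v).ncard)
    (hsplit : ∀ (H : G.Subgraph) (x y : V), x ∈ H.verts → y ∈ H.verts → x ≠ y →
      ∃ X Y : Set V, X ∪ Y = H.verts ∧ Disjoint X Y ∧ x ∈ X ∧ y ∈ Y ∧
        (∀ v ∈ X, (H.neighborSet v).ncard - k ≤ ((H.induce X).neighborSet v).ncard) ∧
        (∀ v ∈ Y, (H.neighborSet v).ncard - k ≤ ((H.induce Y).neighborSet v).ncard)) :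
    ∃ p : G.Walk a b, p.IsPath ∧
      (2 : ℝ) ^ ((d : ℝ) / (k + 2)) ≤ (p.length : ℝ) := by
  obtain ⟨v, hva, hvb⟩ := SplittingPath.exists_ne_ne_of_twoConnected h2 a b
  obtain ⟨p, hp, -, hlen⟩ := splitting_property_long_path_general
    (SplittingPath.splittingProperty_of_subgraph hsplit)
    (SplittingPath.anchored_univ_of_twoConnected h2 hab) trivial trivial hab
    ⟨v, trivial, hva, hvb⟩ fun v _ => by simpa only [Set.inter_univ] using hdeg v
  exact ⟨p, hp, hlen⟩
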